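/- arXiv:2507.20847 — 9 statements merged into one kernel-verified Lean document; each statement's English description precedes it below -/
import Mathlib

section
/- Let 𝒢 be a hypergraph on 𝒱 = {1,…,n} with special vertices 𝒱^sp ⊆ 𝒱, and let m = (m_1,…,m_n) be a tuple of nonnegative integers with at least one m_i > 0. For k ≥ 1, let P_k^mult(𝒢,m) be the set of ordered k-tuples (P_1,…,P_k) such that each P_r is a nonempty marked-independent multiset on 𝒱 and the multiset sum of P_1,…,P_k equals the multiset in which each vertex v occurs exactly m_v times. Then for every positive integer q, the number of marked multi-colorings of 𝒢 associated to m using at most q colors equals Σ_{k≥1} |P_k^mult(𝒢,m)|·C(q,k), where C(q,k) is the binomial coefficient. -/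
/-!
A coloring is determined by its color classes: reading the table of multiplicities
(how often color `c` occurs in `f v`) by colors instead of by vertices turns a marked
multi-coloring into a `q`-tuple of marked-independent multisets with sum `∑ v, m v • {v}`
(`coloringEquiv`). Some of these color classes may be empty. The set `S` of colors whose class
is nonempty, together with the nonempty classes listed in increasing order of color, is a
`#S`-tuple in `PkMult` and determines everything (`fiberEquiv`). Summing over `S`, grouped
by cardinality, gives the formula. Extending by empty classes needs the empty multiset
to be marked-independent, that is `∅ ∉ ℰ`; if `∅ ∈ ℰ`, both sides are zero.
-/

/-- A multiset `U` on the vertex set is marked-independent: its underlying set contains no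
edge of `ℰ`, and every non-special vertex occurs at most once in `U`. -/
def MarkedIndependent {n : ℕ} (ℰ : Finset (Finset (Fin n))) (Vsp : Finset (Fin n))
    (U : Multiset (Fin n)) : Prop :=
  (∀ e ∈ ℰ, ¬ e ⊆ U.toFinset) ∧ ∀ v ∉ Vsp, U.count v ≤ 1

/-- Marked multi-colorings of the hypergraph `(Fin n, ℰ)` with special vertices `Vsp`,
associated to `m`, using at most `q` colors. -/
def MarkedColoring (n : ℕ) (ℰ : Finset (Finset (Fin n))) (Vsp : Finset (Fin n))
    (m : Fin n → ℕ) (q : ℕ) : Type :=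
  {f : Fin n → Multiset (Fin q) //
    (∀ v ∉ Vsp, (f v).Nodup) ∧ (∀ v, Multiset.card (f v) = m v) ∧
    ∀ e ∈ ℰ, ¬ ∃ c : Fin q, ∀ v ∈ e, c ∈ f v}

/-- `P_k^mult(𝒢, m)`: ordered `k`-tuples of nonempty marked-independent multisets whose
multiset sum is the multiset in which each vertex `v` occurs exactly `m_v` times. -/
def PkMult (n : ℕ) (ℰ : Finset (Finset (Fin n))) (Vsp : Finset (Fin n))
    (m : Fin n → ℕ) (k : ℕ) : Set (Fin k → Multiset (Fin n)) :=
  {t | (∀ j, t j ≠ 0) ∧ (∀ j, MarkedIndependent ℰ Vsp (t j)) ∧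
    (∑ j, t j) = ∑ v : Fin n, Multiset.replicate (m v) v}

/-- The multiset-valued function `c ↦ {v with multiplicity (f v).count c}`: for a coloring
`f`, the family of its color classes. -/
def colorClasses {α β : Type*} [Fintype α] [DecidableEq β] (f : α → Multiset β) :
    β → Multiset α :=
  fun c => ∑ v, Multiset.replicate ((f v).count c) v

theorem count_sum_replicate {α : Type*} [Fintype α] [DecidableEq α] (m : α → ℕ) (v : α) :
    (∑ w, Multiset.replicate (m w) w).count v = m v := by
  rw [Multiset.count_sum']
  simp [Multiset.count_replicate]

theorem count_colorClasses {α β : Type*} [Fintype α] [DecidableEq α] [DecidableEq β]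
    (f : α → Multiset β) (c : β) (v : α) : (colorClasses f c).count v = (f v).count c :=
  count_sum_replicate _ v

theorem colorClasses_colorClasses {α β : Type*} [Fintype α] [DecidableEq α] [Fintype β]
    [DecidableEq β] (f : α → Multiset β) : colorClasses (colorClasses f) = f := by
  funext v
  ext c
  rw [count_colorClasses, count_colorClasses]

/-- Tuples of possibly empty marked-independent multisets, indexed by the colors, in which each
vertex `v` occurs `m v` times in total. -/
def ClassTuple (n : ℕ) (ℰ : Finset (Finset (Fin n))) (Vsp : Finset (Fin n))
    (m : Fin n → ℕ) (q : ℕ) : Type :=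
  {g : Fin q → Multiset (Fin n) // (∀ c, MarkedIndependent ℰ Vsp (g c)) ∧
    ∑ c, g c = ∑ v : Fin n, Multiset.replicate (m v) v}

/-- The three conditions on a coloring, expressed through its color classes. -/
theorem coloring_iff {n : ℕ} (ℰ : Finset (Finset (Fin n))) (Vsp : Finset (Fin n))
    (m : Fin n → ℕ) {q : ℕ} (f : Fin n → Multiset (Fin q)) (g : Fin q → Multiset (Fin n))
    (hfg : ∀ c v, (g c).count v = (f v).count c) :
    ((∀ v ∉ Vsp, (f v).Nodup) ∧ (∀ v, Multiset.card (f v) = m v) ∧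
      ∀ e ∈ ℰ, ¬ ∃ c : Fin q, ∀ v ∈ e, c ∈ f v) ↔
    ((∀ c, MarkedIndependent ℰ Vsp (g c)) ∧
      ∑ c, g c = ∑ v : Fin n, Multiset.replicate (m v) v) := by
  have hmem : ∀ c v, v ∈ g c ↔ c ∈ f v := fun c v => by
    rw [← Multiset.count_pos, ← Multiset.count_pos, hfg]
  have hsum : (∑ c, g c = ∑ v : Fin n, Multiset.replicate (m v) v) ↔
      ∀ v, Multiset.card (f v) = m v := by
    rw [Multiset.ext]
    refine forall_congr' fun v => ?_
    rw [count_sum_replicate, Multiset.count_sum']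
    simp only [hfg]
    rw [Multiset.sum_count_eq_card (fun a _ => Finset.mem_univ a)]
  rw [hsum]
  simp only [MarkedIndependent, Multiset.nodup_iff_count_le_one, hfg, Finset.subset_iff,
    Multiset.mem_toFinset, hmem]
  constructor
  · rintro ⟨h1, h2, h3⟩
    exact ⟨fun c => ⟨fun e he h => h3 e he ⟨c, fun v hv => h hv⟩, fun v hv => h1 v hv c⟩, h2⟩
  · rintro ⟨h1, h2⟩
    exact ⟨fun v hv c => (h1 c).2 v hv, h2, fun e he ⟨c, h⟩ => (h1 c).1 e he (fun v hv => h v hv)⟩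

/-- A coloring is the same as the tuple of its color classes. -/
def coloringEquiv (n : ℕ) (ℰ : Finset (Finset (Fin n))) (Vsp : Finset (Fin n))
    (m : Fin n → ℕ) (q : ℕ) : MarkedColoring n ℰ Vsp m q ≃ ClassTuple n ℰ Vsp m q where
  toFun f := ⟨colorClasses f.1,
    (coloring_iff ℰ Vsp m f.1 _ (count_colorClasses f.1)).1 f.2⟩
  invFun g := ⟨colorClasses g.1,
    (coloring_iff ℰ Vsp m _ g.1 (fun c v => (count_colorClasses g.1 v c).symm)).2 g.2⟩
  left_inv f := Subtype.ext (colorClasses_colorClasses f.1)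
  right_inv g := Subtype.ext (colorClasses_colorClasses g.1)

/-- The colors whose class is nonempty. -/
def usedColors {n : ℕ} {ℰ : Finset (Finset (Fin n))} {Vsp : Finset (Fin n)}
    {m : Fin n → ℕ} {q : ℕ} (g : ClassTuple n ℰ Vsp m q) : Finset (Fin q) :=
  Finset.univ.filter fun c => g.1 c ≠ 0

theorem pkMult_finite (n : ℕ) (ℰ : Finset (Finset (Fin n))) (Vsp : Finset (Fin n))
    (m : Fin n → ℕ) (k : ℕ) : (PkMult n ℰ Vsp m k).Finite := by
  refine (Set.Finite.pi' (fun _ : Fin k =>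
    Set.finite_Icc (0 : Multiset (Fin n)) (∑ v : Fin n, Multiset.replicate (m v) v))).subset ?_
  intro t ht j
  refine ⟨Multiset.zero_le _, ?_⟩
  rw [← ht.2.2]
  exact Finset.single_le_sum (f := t) (fun i _ => Multiset.zero_le _) (Finset.mem_univ j)

theorem sum_comp_orderIsoOfFin {q : ℕ} {M : Type*} [AddCommMonoid M] (S : Finset (Fin q))
    (g : Fin q → M) (hg : ∀ c ∉ S, g c = 0) :
    ∑ j, g (S.orderIsoOfFin rfl j) = ∑ c, g c := by
  rw [← Finset.sum_subset (Finset.subset_univ S) (fun c _ hc => hg c hc),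
    ← Finset.sum_coe_sort S g]
  exact Equiv.sum_comp (S.orderIsoOfFin rfl).toEquiv (fun s : S => g s)

/-- Class tuples whose set of used colors is `S` correspond to `#S`-tuples of nonempty
marked-independent multisets, by listing the classes in increasing order of color. -/
def fiberEquiv {n : ℕ} {ℰ : Finset (Finset (Fin n))} (hℰ : ∅ ∉ ℰ) (Vsp : Finset (Fin n))
    (m : Fin n → ℕ) {q : ℕ} (S : Finset (Fin q)) :
    {g : ClassTuple n ℰ Vsp m q // usedColors g = S} ≃ PkMult n ℰ Vsp m S.card where
  toFun g := ⟨fun j => g.1.1 (S.orderIsoOfFin rfl j), by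
    obtain ⟨⟨g, hg1, hg2⟩, rfl⟩ := g
    refine ⟨fun j => ?_, fun j => hg1 _, ?_⟩
    · exact (Finset.mem_filter.1 ((Finset.orderIsoOfFin _ rfl j).2)).2
    · refine (sum_comp_orderIsoOfFin _ g fun c hc => ?_).trans hg2
      simpa [usedColors] using hc⟩
  invFun t := ⟨⟨fun c => if h : c ∈ S then t.1 ((S.orderIsoOfFin rfl).symm ⟨c, h⟩) else 0, by
    obtain ⟨t, ht0, ht1, ht2⟩ := t
    refine ⟨fun c => ?_, ?_⟩
    · dsimp only
      split_ifs with h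
      · exact ht1 _
      · refine ⟨fun e he hs => hℰ ?_, by simp⟩
        rw [Multiset.toFinset_zero, Finset.subset_empty] at hs
        exact hs ▸ he
    · refine Eq.trans ?_ ht2
      rw [← sum_comp_orderIsoOfFin S _ (fun c hc => dif_neg hc)]
      refine Finset.sum_congr rfl fun j _ => ?_
      rw [dif_pos (S.orderIsoOfFin rfl j).2]
      exact congrArg t ((S.orderIsoOfFin rfl).symm_apply_apply j)⟩, by
    ext c
    by_cases h : c ∈ S
    · simpa [usedColors, h] using t.2.1 _
    · simp [usedColors, h]⟩
  left_inv g := by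
    obtain ⟨⟨g, hg1, hg2⟩, hS⟩ := g
    refine Subtype.ext (Subtype.ext (funext fun c => ?_))
    by_cases h : c ∈ S
    · simp [h]
    · have : g c = 0 := by simpa [← hS, usedColors] using h
      simp [h, this]
  right_inv t := by
    refine Subtype.ext (funext fun j => ?_)
    refine (dif_pos (S.orderIsoOfFin rfl j).2).trans ?_
    exact congrArg t.1 ((S.orderIsoOfFin rfl).symm_apply_apply j)

/-- Outside the range `1 ≤ k ≤ ∑ v, m v` there are no tuples: `k` nonempty multisets have total
size at least `k`, and a sum of no multisets is empty, unlike the required sum. -/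
theorem pkMult_eq_empty {n : ℕ} (ℰ : Finset (Finset (Fin n))) (Vsp : Finset (Fin n))
    {m : Fin n → ℕ} (hm : ∃ i, 0 < m i) {k : ℕ} (hk : k ∉ Finset.Icc 1 (∑ v, m v)) :
    PkMult n ℰ Vsp m k = ∅ := by
  refine Set.eq_empty_of_forall_notMem fun t ht => hk ?_
  obtain ⟨h0, -, h2⟩ := ht
  have hc : ∑ j, Multiset.card (t j) = ∑ v, m v := by
    have := congrArg Multiset.card h2
    simpa [Multiset.card_sum] using this
  have hle : k ≤ ∑ j, Multiset.card (t j) := by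
    calc k = ∑ _j : Fin k, 1 := by simp
      _ ≤ _ := Finset.sum_le_sum fun j _ => Multiset.card_pos.2 (h0 j)
  refine Finset.mem_Icc.2 ⟨?_, hc ▸ hle⟩
  rcases Nat.eq_zero_or_pos k with rfl | h
  · obtain ⟨i, hi⟩ := hm
    have := Finset.single_le_sum (f := m) (fun _ _ => Nat.zero_le _) (Finset.mem_univ i)
    rw [Fin.sum_univ_zero] at hc
    omega
  · exact h

theorem card_markedColoring_eq_sum_choose (n : ℕ) (ℰ : Finset (Finset (Fin n)))
    (Vsp : Finset (Fin n)) (m : Fin n → ℕ) (hm : ∃ i, 0 < m i) (q : ℕ) (hq : 0 < q) :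
    Nat.card (MarkedColoring n ℰ Vsp m q)
      = ∑ k ∈ Finset.Icc 1 (∑ v, m v), (PkMult n ℰ Vsp m k).ncard * q.choose k := by
  by_cases hℰ : ∅ ∈ ℰ
  · have : IsEmpty (MarkedColoring n ℰ Vsp m q) :=
      ⟨fun f => f.2.2.2 ∅ hℰ ⟨⟨0, hq⟩, by simp⟩⟩
    rw [Nat.card_of_isEmpty]
    symm
    refine Finset.sum_eq_zero fun k hk => ?_
    have : PkMult n ℰ Vsp m k = ∅ := Set.eq_empty_of_forall_notMem fun t ht =>
      (ht.2.1 ⟨0, (Finset.mem_Icc.1 hk).1⟩).1 ∅ hℰ (Finset.empty_subset _)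
    simp [this]
  have hfin : ∀ S : Finset (Fin q), Finite {g : ClassTuple n ℰ Vsp m q // usedColors g = S} :=
    fun S => by
      have := (pkMult_finite n ℰ Vsp m S.card).to_subtype
      exact Finite.of_equiv _ (fiberEquiv hℰ Vsp m S).symm
  have hcard : Nat.card (MarkedColoring n ℰ Vsp m q) =
      ∑ k ∈ Finset.range (q + 1), (PkMult n ℰ Vsp m k).ncard * q.choose k := by
    rw [Nat.card_congr (coloringEquiv n ℰ Vsp m q),
      ← Nat.card_congr (Equiv.sigmaFiberEquiv usedColors), Nat.card_sigma]
    have h := Finset.sum_powerset_apply_card (fun k => (PkMult n ℰ Vsp m k).ncard)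
      (x := (Finset.univ : Finset (Fin q)))
    rw [Finset.powerset_univ, Finset.card_univ, Fintype.card_fin] at h
    simp only [smul_eq_mul, mul_comm (q.choose _)] at h
    rw [← h]
    exact Finset.sum_congr rfl fun S _ => Nat.card_congr (fiberEquiv hℰ Vsp m S)
  rw [hcard]
  -- The two ranges of `k` differ only in terms with `PkMult` empty or `q.choose k = 0`.
  refine Finset.sum_congr_of_eq_on_inter ?_ ?_ fun _ _ _ => rfl
  · intro k _ hk
    rw [pkMult_eq_empty ℰ Vsp hm hk, Set.ncard_empty, zero_mul]
  · intro k _ hk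
    rw [Nat.choose_eq_zero_of_lt (by simpa using hk), mul_zero]
end

section
/- Let n ≥ 1, let q ≥ 0 be an integer, and let m_1,…,m_n be nonnegative integers. Then the number of n-tuples (A_1,…,A_n) of subsets of a fixed q-element set with |A_i| = m_i for all i and A_1 ∩ A_2 ∩ ⋯ ∩ A_n = ∅ equals Σ_{k=0}^{min{m_1,…,m_n}} (−1)^k · C(q,k) · C(q−k, m_1−k) · C(q−k, m_2−k) ⋯ C(q−k, m_n−k), as an identity of integers (where C(a,b) denotes the binomial coefficient). -/
/-!
Inclusion–exclusion over the set of common elements. For a tuple `A` with intersection `I`, the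
alternating sum of `(-1) ^ #t` over `t ⊆ I` is `1` if `I = ∅` and `0` otherwise, so the number of
tuples with empty intersection is the sum over `t` of `(-1) ^ #t` times the number of tuples all of
whose members contain `t`. That number is a product over `i`, with factors evaluated in
`card_powersetCard_filter_superset`; it depends on `t` only through `#t = k`, and it vanishes as
soon as `k` exceeds some `m i`. Grouping the sets `t` by cardinality yields the factor `C(q, k)`.
-/

/-- The `m`-subsets of a `q`-set that contain `t` correspond to the `(m - #t)`-subsets of the
complement of `t`, via `s ↦ s \ t`. -/
lemma card_powersetCard_filter_superset (q m : ℕ) (t : Finset (Fin q)) :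
    ((Finset.univ.powersetCard m).filter (t ⊆ ·)).card =
      if t.card ≤ m then (q - t.card).choose (m - t.card) else 0 := by
  split_ifs with h
  · have hc : (tᶜ.powersetCard (m - t.card)).card = (q - t.card).choose (m - t.card) := by
      rw [Finset.card_powersetCard, Finset.card_compl, Fintype.card_fin]
    rw [← hc]
    refine Finset.card_nbij' (fun s => s \ t) (fun s => s ∪ t) ?_ ?_ ?_ ?_
    · intro s hs
      simp only [Finset.coe_filter, Finset.mem_powersetCard, Set.mem_ofPred_eq] at hs
      simp only [Finset.mem_coe, Finset.mem_powersetCard]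
      refine ⟨fun x hx => by simp_all, ?_⟩
      rw [Finset.card_sdiff_of_subset hs.2, hs.1.2]
    · intro s hs
      simp only [Finset.mem_coe, Finset.mem_powersetCard] at hs
      simp only [Finset.coe_filter, Finset.mem_powersetCard, Set.mem_ofPred_eq]
      have hd : Disjoint s t := Finset.subset_compl_iff_disjoint_right.mp hs.1
      refine ⟨⟨Finset.subset_univ _, ?_⟩, Finset.subset_union_right⟩
      rw [Finset.card_union_of_disjoint hd]
      omega
    · intro s hs
      simp only [Finset.coe_filter, Set.mem_ofPred_eq] at hs
      exact Finset.sdiff_union_of_subset hs.2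
    · intro s hs
      simp only [Finset.mem_coe, Finset.mem_powersetCard] at hs
      exact Finset.union_sdiff_cancel_right
        (Finset.subset_compl_iff_disjoint_right.mp hs.1)
  · rw [Finset.card_eq_zero, Finset.filter_eq_empty_iff]
    intro s hs hts
    rw [Finset.mem_powersetCard] at hs
    exact h (hs.2 ▸ Finset.card_le_card hts)

theorem card_tuples_empty_inter (n : ℕ) (hn : 1 ≤ n) (q : ℕ) (m : Fin n → ℕ) :
    (Nat.card {A : Fin n → Finset (Fin q) //
        (∀ i, (A i).card = m i) ∧ ¬ ∃ c : Fin q, ∀ i, c ∈ A i} : ℤ)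
      = ∑ k ∈ Finset.range (sInf (Set.range m) + 1),
          (-1 : ℤ) ^ k * (q.choose k : ℤ) * ∏ i, (((q - k).choose (m i - k) : ℕ) : ℤ) := by
  classical
  have : Nonempty (Fin n) := ⟨⟨0, hn⟩⟩
  let P : Finset (Fin n → Finset (Fin q)) :=
    Fintype.piFinset fun i => Finset.univ.powersetCard (m i)
  let I : (Fin n → Finset (Fin q)) → Finset (Fin q) :=
    fun A => Finset.univ.filter fun c => ∀ i, c ∈ A i
  let g : ℕ → ℤ := fun k =>
    (-1) ^ k * ∏ i, ((if k ≤ m i then (q - k).choose (m i - k) else 0 : ℕ) : ℤ)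
  have hle (k : ℕ) : k ≤ sInf (Set.range m) ↔ ∀ i, k ≤ m i := by
    constructor
    · exact fun h i => h.trans (Nat.sInf_le ⟨i, rfl⟩)
    · intro h
      obtain ⟨i, hi⟩ := Nat.sInf_mem (Set.range_nonempty m)
      exact hi ▸ h i
  have hcard : Nat.card {A : Fin n → Finset (Fin q) //
      (∀ i, (A i).card = m i) ∧ ¬ ∃ c : Fin q, ∀ i, c ∈ A i} =
      (P.filter fun A => I A = ∅).card := by
    rw [Nat.card_eq_fintype_card]
    refine Fintype.card_of_subtype _ fun A => ?_
    simp [P, I, Finset.filter_eq_empty_iff]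
  have hprod (t : Finset (Fin q)) : (-1 : ℤ) ^ t.card * (P.filter fun A => t ⊆ I A).card =
      g t.card := by
    have hP : (P.filter fun A => t ⊆ I A) =
        Fintype.piFinset fun i => (Finset.univ.powersetCard (m i)).filter (t ⊆ ·) := by
      ext A
      simp only [P, I, Finset.mem_filter, Fintype.mem_piFinset, Finset.subset_iff,
        Finset.mem_univ, true_and]
      grind
    rw [hP, Fintype.card_piFinset]
    simp only [card_powersetCard_filter_superset, Nat.cast_prod, g]
  have hsum : ((P.filter fun A => I A = ∅).card : ℤ) =
      ∑ t ∈ (Finset.univ : Finset (Fin q)).powerset, g t.card := by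
    calc ((P.filter fun A => I A = ∅).card : ℤ)
        = ∑ A ∈ P, ∑ t ∈ (I A).powerset, (-1 : ℤ) ^ t.card := by
          simp only [Finset.sum_powerset_neg_one_pow_card, Finset.sum_boole]
      _ = ∑ A ∈ P, ∑ t ∈ (Finset.univ : Finset (Fin q)).powerset,
            if t ⊆ I A then (-1 : ℤ) ^ t.card else 0 := by
          refine Finset.sum_congr rfl fun A _ => ?_
          rw [← Finset.sum_filter]
          congr 1
          ext t
          simp
      _ = ∑ t ∈ (Finset.univ : Finset (Fin q)).powerset, g t.card := by
          rw [Finset.sum_comm]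
          refine Finset.sum_congr rfl fun t _ => ?_
          rw [← hprod t, ← Finset.sum_filter, Finset.sum_const, nsmul_eq_mul, mul_comm]
  rw [hcard, hsum, Finset.sum_powerset_apply_card, Finset.card_univ, Fintype.card_fin]
  -- Both index ranges extend by zero: `C(q, k) = 0` for `k > q`, and `g k = 0` for `k > min m`.
  have hq : ∑ k ∈ Finset.range (q + 1), q.choose k • g k =
      ∑ k ∈ Finset.range (q + 1 + (sInf (Set.range m) + 1)), q.choose k • g k := by
    refine Finset.sum_subset (Finset.range_mono (by omega)) fun k _ hk => ?_
    rw [Finset.mem_range] at hk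
    rw [Nat.choose_eq_zero_of_lt (by omega), zero_smul]
  have hm : ∑ k ∈ Finset.range (sInf (Set.range m) + 1), q.choose k • g k =
      ∑ k ∈ Finset.range (q + 1 + (sInf (Set.range m) + 1)), q.choose k • g k := by
    refine Finset.sum_subset (Finset.range_mono (by omega)) fun k _ hk => ?_
    have hk' : ¬ ∀ i, k ≤ m i := by
      rw [← hle]
      rw [Finset.mem_range] at hk
      omega
    obtain ⟨i, hi⟩ := not_forall.mp hk'
    have : ∏ i, ((if k ≤ m i then (q - k).choose (m i - k) else 0 : ℕ) : ℤ) = 0 :=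
      Finset.prod_eq_zero (Finset.mem_univ i) (by simp [hi])
    simp only [g, this, mul_zero, smul_zero]
  rw [hq, ← hm]
  refine Finset.sum_congr rfl fun k hk => ?_
  have hk' : ∀ i, k ≤ m i := (hle k).mp (Nat.lt_succ_iff.mp (Finset.mem_range.mp hk))
  simp only [g, hk', if_true, nsmul_eq_mul]
  ring
end

section
/- Let 𝒢 be a hypergraph on 𝒱 = {1,…,n} with special vertices 𝒱^sp ⊆ 𝒱, and let m = (m_1,…,m_n) be a tuple of nonnegative integers. Then for every positive integer q, the number of marked multi-colorings of 𝒢 associated to m using at most q colors equals Σ_{λ∈S(m)} Π_{𝒢(s(λ),m)}(q) / (Π_{i∈supp(m)} Π_{k≥1} (d_k^{λ_i})!), as an identity of rational numbers, where Π_{𝒢(s(λ),m)}(q) is the number of proper colorings of the blow-up hypergraph 𝒢(s(λ),m) with q colors. -/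
/-!
A multiset `f` of colors records, through the multiplicities of its elements, a partition
`mulType f` of its cardinality.  Marked multi-colorings are classified by the tuple of these
partitions; the tuples that occur all lie in `S(m)`, since a multiset has no repeated element
exactly when all its multiplicities are `1`.

Given an enumeration `s : Fin ℓ → ℕ` of the parts of a partition, an injective map
`g : Fin ℓ → α` assembles to the multiset `assemble s g` in which `g r` has multiplicity `s r`.
Every multiset with multiplicity partition `s` arises, and the injections producing a given one
form a torsor under the permutations of `Fin ℓ` preserving `s`, of which there are
`∏ k, (d_k)!` (`card_assemble_fiber`).  The clique edges make a
coloring of the blow-up a tuple of injections, one for each vertex; the remaining edges are respected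
exactly when the assembled tuple of multisets is a marked multi-coloring, because an edge `e` has a
lift to the blow-up that is monochromatic of color `c` exactly when `c` belongs to all the assembled
multisets along `e`.  So assembling is a map from
blow-up colorings onto marked multi-colorings of type `λ` all of whose fibers have
`∏ i, ∏ k, (d_k^{λ_i})!` elements, and summing over `λ` gives the identity.
-/

open scoped Classical

/-- Proper colorings with `q` colors of the blow-up hypergraph `𝒢(s(λ), m)`:
each vertex `i` with `m i ≠ 0` is replaced by a clique of size `ℓ(λ_i)`, and for each
edge `e ⊆ supp(m)` of `𝒢` one takes all edges consisting of one vertex from each of the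
cliques corresponding to the vertices of `e`.  (For `i ∉ supp(m)` the partition `λ_i` is
empty, so the corresponding clique is empty.) -/
def BlowupColoring (n : ℕ) (ℰ : Finset (Finset (Fin n))) (m : Fin n → ℕ)
    (P : ∀ i : Fin n, Nat.Partition (m i)) (q : ℕ) : Type :=
  {g : ((i : Fin n) × Fin ((P i).parts.card)) → Fin q //
    (∀ i : Fin n, ∀ r s : Fin ((P i).parts.card), r ≠ s → g ⟨i, r⟩ ≠ g ⟨i, s⟩) ∧
    ∀ e ∈ ℰ, (∀ i ∈ e, m i ≠ 0) →
      ∀ k : (i : Fin n) → i ∈ e → Fin ((P i).parts.card),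
        ¬ ∃ c : Fin q, ∀ i, ∀ h : i ∈ e, g ⟨i, k i h⟩ = c}

/-! ### Multiplicity partitions and assembled multisets -/

section Multisets

variable {α : Type*} [DecidableEq α]

/-- The multiset of multiplicities of the distinct elements of `f`. -/
def mulType (f : Multiset α) : Multiset ℕ := f.dedup.map f.count

lemma mulType_pos (f : Multiset α) {k : ℕ} (hk : k ∈ mulType f) : 0 < k := by
  obtain ⟨a, ha, rfl⟩ := Multiset.mem_map.1 hk
  exact Multiset.count_pos.2 (Multiset.mem_dedup.1 ha)

lemma mulType_sum (f : Multiset α) : (mulType f).sum = Multiset.card f :=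
  Multiset.toFinset_sum_count_eq f

lemma nodup_iff_mulType (f : Multiset α) :
    f.Nodup ↔ mulType f = Multiset.replicate (Multiset.card f) 1 := by
  constructor
  · intro h
    rw [Multiset.eq_replicate]
    refine ⟨by simp [mulType, h.dedup], fun b hb => ?_⟩
    obtain ⟨a, ha, rfl⟩ := Multiset.mem_map.1 hb
    exact Multiset.count_eq_one_of_mem h (Multiset.mem_dedup.1 ha)
  · intro h
    rw [Multiset.nodup_iff_count_eq_one]
    intro a ha
    have : f.count a ∈ mulType f := Multiset.mem_map_of_mem _ (Multiset.mem_dedup.2 ha)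
    rw [h] at this
    exact Multiset.eq_of_mem_replicate this

/-- The multiplicities of a multiset of cardinality `m`, as a partition of `m`. -/
def mulPartition {m : ℕ} (f : Multiset α) (h : Multiset.card f = m) : Nat.Partition m :=
  ⟨mulType f, fun hk => mulType_pos f hk, (mulType_sum f).trans h⟩

/-- The multiset in which each `g r` is taken `s r` times. -/
def assemble {ℓ : ℕ} (s : Fin ℓ → ℕ) (g : Fin ℓ → α) : Multiset α :=
  ∑ r, Multiset.replicate (s r) (g r)

variable {ℓ : ℕ} {s : Fin ℓ → ℕ} {g : Fin ℓ → α}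

lemma count_assemble (hg : Function.Injective g) (r : Fin ℓ) :
    (assemble s g).count (g r) = s r := by
  simp [assemble, Multiset.count_sum', Multiset.count_replicate, hg.eq_iff]

omit [DecidableEq α] in
lemma mem_assemble (hs : ∀ r, 0 < s r) {c : α} : c ∈ assemble s g ↔ ∃ r, g r = c := by
  simp only [assemble, Multiset.mem_sum, Finset.mem_univ, true_and, Multiset.mem_replicate]
  exact exists_congr fun r => ⟨fun h => h.2.symm, fun h => ⟨(hs r).ne', h.symm⟩⟩

lemma mulType_assemble (hs : ∀ r, 0 < s r) (hg : Function.Injective g) :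
    mulType (assemble s g) = Finset.univ.val.map s := by
  have : (assemble s g).dedup = Finset.univ.val.map g := by
    refine (Multiset.Nodup.ext (Multiset.nodup_dedup _)
      (Finset.univ.nodup.map hg)).2 fun c => ?_
    simp [mem_assemble hs]
  rw [mulType, this, Multiset.map_map]
  exact Multiset.map_congr rfl fun r _ => count_assemble hg r

omit [DecidableEq α] in
lemma card_assemble : Multiset.card (assemble s g) = (Finset.univ.val.map s).sum := by
  simp only [assemble, Multiset.card_sum, Multiset.card_replicate]
  rfl

lemma eq_assemble (hs : ∀ r, 0 < s r) (hg : Function.Injective g) {f : Multiset α}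
    (hc : ∀ r, f.count (g r) = s r) (hf : ∀ c ∈ f, ∃ r, g r = c) : assemble s g = f := by
  ext c
  by_cases h : ∃ r, g r = c
  · obtain ⟨r, rfl⟩ := h
    rw [count_assemble hg, hc]
  · rw [Multiset.count_eq_zero.2 (fun h' => h ((mem_assemble hs).1 h')),
      Multiset.count_eq_zero.2 (fun h' => h (hf c h'))]

/-- Two families with the same multiset of values differ by a bijection of the index types: here
the multiplicities of `f` and an enumeration of its multiplicity partition. -/
lemma exists_equiv_of_mulType {f : Multiset α} (h : mulType f = Finset.univ.val.map s) :
    ∃ e : Fin ℓ ≃ {c // c ∈ f}, ∀ r, f.count (e r).1 = s r := by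
  have key : ∀ k, Nonempty ({r // s r = k} ≃ {c : {c // c ∈ f} // f.count c.1 = k}) := by
    intro k
    have e1 : {c : {c // c ∈ f} // f.count c.1 = k} ≃ {c // c ∈ f.toFinset.filter (f.count · = k)} :=
      (Equiv.subtypeSubtypeEquivSubtypeInter (· ∈ f) (f.count · = k)).trans
        (Equiv.subtypeEquivRight fun c => by simp)
    have hk := congrArg (Multiset.count k) h
    rw [mulType, Multiset.count_map, Multiset.count_map] at hk
    have : Fintype.card {r // s r = k} = Fintype.card {c // c ∈ f.toFinset.filter (f.count · = k)} := by
      rw [Fintype.card_coe, Fintype.card_subtype]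
      simp only [Finset.card, Finset.filter_val, Multiset.toFinset_val]
      simp only [eq_comm (a := k)] at hk
      exact hk.symm
    exact ⟨(Fintype.equivOfCardEq this).trans e1.symm⟩
  have e := fun k => (key k).some
  exact ⟨Equiv.ofFiberEquiv e, fun r => Equiv.ofFiberEquiv_map e r⟩

/-- Permutations preserving an enumeration of a partition of `m`. -/
lemma card_stabilizer (hs : ∀ r, 0 < s r) {m : ℕ} (hm : (Finset.univ.val.map s).sum = m) :
    Nat.card {σ : Equiv.Perm (Fin ℓ) // s ∘ σ = s}
      = ∏ k ∈ Finset.Icc 1 m, ((Finset.univ.val.map s).count k).factorial := by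
  rw [Nat.card_eq_fintype_card, DomMulAct.stabilizer_card']
  have hcount : ∀ k, Fintype.card {r // s r = k} = (Finset.univ.val.map s).count k := by
    intro k
    rw [Fintype.card_subtype, Multiset.count_map]
    simp only [Finset.card, Finset.filter_val, eq_comm (a := k)]
  simp only [hcount]
  refine Finset.prod_subset (fun k hk => ?_) fun k _ hk => ?_
  · obtain ⟨r, -, rfl⟩ := Finset.mem_image.1 hk
    rw [Finset.mem_Icc]
    refine ⟨hs r, hm ▸ ?_⟩
    exact Multiset.single_le_sum (fun _ _ => Nat.zero_le _) _
      (Multiset.mem_map_of_mem s (Finset.mem_univ_val r))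
  · rw [Multiset.count_eq_zero.2, Nat.factorial_zero]
    simpa using hk

/-- The injections assembling to a given multiset form a torsor under the permutations
preserving `s`. -/
lemma card_assemble_fiber (hs : ∀ r, 0 < s r) {m : ℕ} (hm : (Finset.univ.val.map s).sum = m)
    {f : Multiset α} (h : mulType f = Finset.univ.val.map s) :
    Nat.card {g : Fin ℓ → α // Function.Injective g ∧ assemble s g = f}
      = ∏ k ∈ Finset.Icc 1 m, ((Finset.univ.val.map s).count k).factorial := by
  obtain ⟨e, he⟩ := exists_equiv_of_mulType h
  rw [← card_stabilizer hs hm]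
  symm
  refine Nat.card_congr (Equiv.ofBijective
    (fun σ => ⟨fun r => (e (σ.1 r)).1,
      fun a b hab => σ.1.injective (e.injective (Subtype.ext hab)), ?_⟩) ⟨?_, ?_⟩)
  · refine eq_assemble hs (fun a b hab => σ.1.injective (e.injective (Subtype.ext hab)))
      (fun r => ?_) fun c hc => ⟨σ.1.symm (e.symm ⟨c, hc⟩), by simp⟩
    rw [he]
    exact congrFun σ.2 r
  · intro σ τ hστ
    refine Subtype.ext (Equiv.ext fun r => e.injective (Subtype.ext ?_))
    exact congrFun (Subtype.ext_iff.1 hστ) r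
  · rintro ⟨g, hg, rfl⟩
    have hmem : ∀ r, g r ∈ assemble s g := fun r => (mem_assemble hs).2 ⟨r, rfl⟩
    have hinj : Function.Injective fun r => e.symm ⟨g r, hmem r⟩ := fun a b hab =>
      hg (Subtype.ext_iff.1 (e.symm.injective hab))
    refine ⟨⟨Equiv.ofBijective _ (Finite.injective_iff_bijective.1 hinj), ?_⟩, ?_⟩
    · funext r
      simp only [Function.comp_apply, Equiv.ofBijective_apply]
      rw [← he, Equiv.apply_symm_apply, count_assemble hg]
    · simp

end Multisets

/-! ### Assembling colorings of the blow-up -/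

/-- An enumeration of the parts of a partition, indexed as in the vertex set of the blow-up. -/
noncomputable def partEnum {m : ℕ} (p : Nat.Partition m) (r : Fin (Multiset.card p.parts)) : ℕ :=
  p.parts.toList.get (r.cast (Multiset.length_toList _).symm)

lemma map_partEnum {m : ℕ} (p : Nat.Partition m) :
    Finset.univ.val.map (partEnum p) = p.parts := by
  have h : ∀ (l : List ℕ) (n : ℕ) (hn : n = l.length),
      Finset.univ.val.map (fun r : Fin n => l.get (r.cast hn)) = (l : Multiset ℕ) := by
    rintro l _ rfl
    simp
  exact (h _ _ (Multiset.length_toList _).symm).trans (Multiset.coe_toList _)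

lemma partEnum_pos {m : ℕ} (p : Nat.Partition m) (r) : 0 < partEnum p r := by
  apply p.parts_pos
  rw [← map_partEnum p]
  exact Multiset.mem_map_of_mem _ (Finset.mem_univ_val r)

section Colorings

variable {n : ℕ} {ℰ : Finset (Finset (Fin n))} {Vsp : Finset (Fin n)} {m : Fin n → ℕ} {q : ℕ}

instance : Finite (MarkedColoring n ℰ Vsp m q) :=
  Finite.of_injective (β := ∀ v, Sym (Fin q) (m v))
    (fun F v => ⟨F.1 v, F.2.2.1 v⟩)
    fun F F' h => Subtype.ext (funext fun v => Subtype.ext_iff.1 (congrFun h v))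

/-- The tuple of multiplicity partitions of a marked multi-coloring. -/
def MarkedColoring.type (F : MarkedColoring n ℰ Vsp m q) (i : Fin n) : Nat.Partition (m i) :=
  mulPartition (F.1 i) (F.2.2.1 i)

lemma MarkedColoring.type_mem (F : MarkedColoring n ℰ Vsp m q) (i : Fin n) (hi : i ∉ Vsp) :
    (F.type i).parts = Multiset.replicate (m i) 1 := by
  have := (nodup_iff_mulType _).1 (F.2.1 i hi)
  rwa [F.2.2.1 i] at this

lemma BlowupColoring.injective {P : ∀ i : Fin n, Nat.Partition (m i)}
    (G : BlowupColoring n ℰ m P q) (i : Fin n) : Function.Injective fun r => G.1 ⟨i, r⟩ :=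
  fun r s h => by_contra fun hrs => G.2.1 i r s hrs h

/-- The marked multi-coloring of type `P` assembled from a coloring of the blow-up. -/
noncomputable def BlowupColoring.toMarked {P : ∀ i : Fin n, Nat.Partition (m i)}
    (hP : ∀ i ∉ Vsp, (P i).parts = Multiset.replicate (m i) 1)
    (G : BlowupColoring n ℰ m P q) : {F : MarkedColoring n ℰ Vsp m q // F.type = P} :=
  have hT : ∀ i, mulType (assemble (partEnum (P i)) fun r => G.1 ⟨i, r⟩) = (P i).parts :=
    fun i => (mulType_assemble (partEnum_pos _) (G.injective i)).trans (map_partEnum _)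
  have hC : ∀ i, Multiset.card (assemble (partEnum (P i)) fun r => G.1 ⟨i, r⟩) = m i :=
    fun i => by rw [card_assemble, map_partEnum, (P i).parts_sum]
  ⟨⟨fun i => assemble (partEnum (P i)) fun r => G.1 ⟨i, r⟩,
    fun i hi => by rw [nodup_iff_mulType, hT, hC, hP i hi], hC, by
      rintro e he ⟨c, hc⟩
      have hk : ∀ i ∈ e, ∃ r, G.1 ⟨i, r⟩ = c := fun i hi =>
        (mem_assemble (partEnum_pos _)).1 (hc i hi)
      choose k hk using hk
      refine G.2.2 e he (fun i hi h0 => ?_) k ⟨c, hk⟩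
      have h1 := Multiset.card_eq_zero.1 ((hC i).trans h0)
      exact Multiset.notMem_zero c (h1 ▸ hc i hi)⟩,
    funext fun i => Nat.Partition.ext (hT i)⟩

/-- A coloring of the blow-up over a given marked multi-coloring amounts to independent choices,
at each vertex, of an injection assembling to the given multiset. -/
noncomputable def toMarkedFiberEquiv {P : ∀ i : Fin n, Nat.Partition (m i)}
    (hP : ∀ i ∉ Vsp, (P i).parts = Multiset.replicate (m i) 1)
    (F : {F : MarkedColoring n ℰ Vsp m q // F.type = P}) :
    {G : BlowupColoring n ℰ m P q // G.toMarked hP = F} ≃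
      ∀ i, {g : Fin (Multiset.card (P i).parts) → Fin q //
        Function.Injective g ∧ assemble (partEnum (P i)) g = F.1.1 i} where
  toFun G i := ⟨fun r => G.1.1 ⟨i, r⟩, G.1.injective i, congrFun (congrArg (fun X => X.1.1) G.2) i⟩
  invFun H := ⟨⟨fun x => (H x.1).1 x.2, fun i r s hrs h => hrs ((H i).2.1 h), by
      rintro e he - k ⟨c, hc⟩
      refine F.1.2.2.2 e he ⟨c, fun i hi => ?_⟩
      rw [← (H i).2.2, mem_assemble (partEnum_pos _)]
      exact ⟨k i hi, hc i hi⟩⟩,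
    Subtype.ext (Subtype.ext (funext fun i => (H i).2.2))⟩
  left_inv _ := rfl
  right_inv _ := rfl

lemma card_blowup {P : ∀ i : Fin n, Nat.Partition (m i)}
    (hP : ∀ i ∉ Vsp, (P i).parts = Multiset.replicate (m i) 1) :
    Nat.card (BlowupColoring n ℰ m P q)
      = Nat.card {F : MarkedColoring n ℰ Vsp m q // F.type = P} *
        ∏ i, ∏ k ∈ Finset.Icc 1 (m i), ((P i).parts.count k).factorial := by
  have := Fintype.ofFinite {F : MarkedColoring n ℰ Vsp m q // F.type = P}
  have : Finite (BlowupColoring n ℰ m P q) := Subtype.finite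
  rw [Nat.card_congr (Equiv.sigmaFiberEquiv
    (BlowupColoring.toMarked (ℰ := ℰ) (q := q) hP)).symm, Nat.card_sigma]
  have hfib : ∀ F : {F : MarkedColoring n ℰ Vsp m q // F.type = P},
      Nat.card {G : BlowupColoring n ℰ m P q // G.toMarked hP = F}
        = ∏ i, ∏ k ∈ Finset.Icc 1 (m i), ((P i).parts.count k).factorial := by
    intro F
    rw [Nat.card_congr (toMarkedFiberEquiv hP F), Nat.card_pi]
    refine Finset.prod_congr rfl fun i _ => ?_
    have hF : mulType (F.1.1 i) = (P i).parts :=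
      congrArg Nat.Partition.parts (congrFun F.2 i)
    rw [card_assemble_fiber (partEnum_pos _) (m := m i)
      (by rw [map_partEnum, (P i).parts_sum]) (by rw [map_partEnum, hF]), map_partEnum]
  simp only [hfib, Finset.sum_const, Finset.card_univ, smul_eq_mul, Nat.card_eq_fintype_card]

end Colorings

theorem card_markedColoring_eq_sum_blowup (n : ℕ) (ℰ : Finset (Finset (Fin n)))
    (Vsp : Finset (Fin n)) (m : Fin n → ℕ) (q : ℕ) (hq : 0 < q) :
    (Nat.card (MarkedColoring n ℰ Vsp m q) : ℚ)
      = ∑ P ∈ Finset.univ.filter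
            (fun P : ∀ i : Fin n, Nat.Partition (m i) =>
              ∀ i ∉ Vsp, (P i).parts = Multiset.replicate (m i) 1),
          (Nat.card (BlowupColoring n ℰ m P q) : ℚ) /
            ∏ i ∈ Finset.univ.filter (fun i : Fin n => m i ≠ 0),
              ∏ k ∈ Finset.Icc 1 (m i), (((P i).parts.count k).factorial : ℚ) := by
  rw [Nat.card_congr (Equiv.sigmaFiberEquiv
    (MarkedColoring.type (ℰ := ℰ) (Vsp := Vsp) (m := m) (q := q))).symm, Nat.card_sigma,
    Nat.cast_sum, eq_comm]
  refine Finset.sum_subset_zero_on_sdiff (Finset.filter_subset _ _) (fun P hP => ?_)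
    fun P hP => ?_
  · -- no marked multi-coloring has a type outside `S(m)`
    have : IsEmpty {F : MarkedColoring n ℰ Vsp m q // F.type = P} := by
      refine ⟨fun F => ?_⟩
      simp only [Finset.mem_sdiff, Finset.mem_univ, true_and, Finset.mem_filter] at hP
      exact hP fun i hi => F.2 ▸ F.1.type_mem i hi
    simp
  · rw [card_blowup (Finset.mem_filter.1 hP).2]
    -- vertices outside the support contribute empty products
    have hprod : ∏ i ∈ Finset.univ.filter (fun i : Fin n => m i ≠ 0),
        ∏ k ∈ Finset.Icc 1 (m i), (((P i).parts.count k).factorial : ℚ)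
        = ∏ i, ∏ k ∈ Finset.Icc 1 (m i), (((P i).parts.count k).factorial : ℚ) := by
      refine Finset.prod_filter_of_ne fun i _ h h0 => h ?_
      simp [h0]
    rw [hprod]
    push_cast
    refine mul_div_cancel_right₀ _ ?_
    exact Finset.prod_ne_zero_iff.2 fun i _ => Finset.prod_ne_zero_iff.2 fun k _ =>
      Nat.cast_ne_zero.2 (Nat.factorial_ne_zero _)
end

section
/- Let G be a graph on vertex set {1,…,n} such that the ordering 1 < 2 < ⋯ < n is a perfect elimination ordering, and fix special vertices 𝒱^sp ⊆ {1,…,n}. Then for every positive integer q and every tuple m = (m_1,…,m_n) of nonnegative integers, the number of marked multi-colorings of G associated to m using at most q colors equals Σ_{λ∈S(m)} Π_{j∈supp(m)} C(q − b_j^λ, ℓ(λ_j)) · ℓ(λ_j)! / (Π_{k≥1} (d_k^{λ_j})!), where b_j^λ = Σ ℓ(λ_i), the sum running over all vertices i < j adjacent to j in G, and where C(t,k) = t(t−1)⋯(t−k+1)/k! denotes the generalized binomial coefficient of an integer t; this is an identity of rational numbers. -/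
/-!
Sort the marked multi-colorings by the partitions `s v` formed by the color multiplicities at each
vertex `v`, and color the vertices of such a class in increasing order. When vertex `j` is reached,
its earlier neighbors form a clique, so their color supports are pairwise disjoint and together
forbid exactly `b_j` colors. Hence `j` takes its multiset from a palette of `q - b_j` colors, and
the number of multisets with multiplicities `s j` over a palette of `N` colors is
`N (N - 1) ⋯ (N - ℓ + 1) / ∏ d_k!` (`exists_finset_multType`). The number of choices at `j` depends
only on `s`, so the size of the class is a product (`exists_finset_coloring`).

If `b_j > q`, the generalized binomial coefficient at `j` need not vanish, but then no coloring of
the earlier vertices exists, and by induction the product over the earlier vertices is already `0`.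
-/

open scoped Classical

/-- The generalized binomial coefficient `C(t,k) = t(t−1)⋯(t−k+1)/k!` of an integer `t`. -/
noncomputable def zChoose (t : ℤ) (k : ℕ) : ℚ :=
  (∏ i ∈ Finset.range k, ((t : ℚ) - (i : ℚ))) / (k.factorial : ℚ)

/-! ### The type of a multiset -/

/-- The multiset of (positive) multiplicities of the distinct elements of `M`; as a partition of
`Multiset.card M`, this is the type of `M`. -/
def multType {α : Type*} [DecidableEq α] (M : Multiset α) : Multiset ℕ :=
  M.toFinset.val.map (fun c => M.count c)

/-- The product `∏ d_k!`, where `d_k` is the multiplicity of `k` in `s`. -/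
def multFact (s : Multiset ℕ) : ℕ := ∏ k ∈ s.toFinset, (s.count k).factorial

lemma zero_notMem_multType {α : Type*} [DecidableEq α] (M : Multiset α) : 0 ∉ multType M := by
  simp [multType, Multiset.count_eq_zero]

lemma card_multType {α : Type*} [DecidableEq α] (M : Multiset α) :
    (multType M).card = M.toFinset.card := by
  exact Multiset.card_map _ _

lemma sum_multType {α : Type*} [DecidableEq α] (M : Multiset α) :
    (multType M).sum = M.card := by
  exact Multiset.toFinset_sum_count_eq M

lemma multType_add_replicate {α : Type*} [DecidableEq α] (M : Multiset α) (a : α) (ha : a ∉ M)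
    (k : ℕ) (hk : k ≠ 0) : multType (M + Multiset.replicate k a) = k ::ₘ multType M := by
  have h1 : (M + Multiset.replicate k a).toFinset = insert a M.toFinset := by
    ext c
    simp [hk]
  have h2 : a ∉ M.toFinset := by simpa using ha
  unfold multType
  rw [h1, Finset.insert_val_of_notMem h2, Multiset.map_cons]
  congr 1
  · simp [Multiset.count_eq_zero_of_notMem ha]
  · refine Multiset.map_congr rfl fun c hc => ?_
    have : a ≠ c := by
      rintro rfl
      exact h2 hc
    simp [Multiset.count_replicate, this]

lemma nodup_iff_multType {α : Type*} [DecidableEq α] (M : Multiset α) :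
    M.Nodup ↔ multType M = Multiset.replicate M.card 1 := by
  constructor
  · intro h
    rw [Multiset.eq_replicate]
    refine ⟨by rw [card_multType, Multiset.toFinset_card_of_nodup h], fun b hb => ?_⟩
    simp only [multType, Multiset.mem_map] at hb
    obtain ⟨c, hc, rfl⟩ := hb
    exact Multiset.count_eq_one_of_mem h (by simpa using hc)
  · intro h
    rw [← Multiset.toFinset_card_eq_card_iff_nodup, ← card_multType, h, Multiset.card_replicate]

lemma multFact_eq_of_subset (s : Multiset ℕ) (T : Finset ℕ) (h : s.toFinset ⊆ T) :
    multFact s = ∏ k ∈ T, (s.count k).factorial := by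
  refine Finset.prod_subset h fun k _ hk => ?_
  rw [Multiset.count_eq_zero_of_notMem (by simpa using hk), Nat.factorial_zero]

lemma multFact_pos (s : Multiset ℕ) : 0 < multFact s :=
  Finset.prod_pos fun _ _ => Nat.factorial_pos _

lemma multFact_erase (s : Multiset ℕ) (k : ℕ) (hk : k ∈ s) :
    multFact s = s.count k * multFact (s.erase k) := by
  have hk' : k ∈ s.toFinset := by simpa using hk
  rw [multFact_eq_of_subset (s.erase k) s.toFinset
    (Multiset.toFinset_subset.2 (Multiset.erase_subset k s)), multFact,
    ← Finset.mul_prod_erase _ _ hk', ← Finset.mul_prod_erase _ _ hk', ← mul_assoc,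
    Multiset.count_erase_self]
  congr 1
  · exact (Nat.mul_factorial_pred (Multiset.count_pos.2 hk).ne').symm
  · refine Finset.prod_congr rfl fun j hj => ?_
    rw [Multiset.count_erase_of_ne (Finset.ne_of_mem_erase hj)]

/-! ### Multisets of a given type over a palette -/

lemma succ_descFactorial_eq_add (N l : ℕ) :
    (N + 1).descFactorial (l + 1) =
      N.descFactorial (l + 1) + (l + 1) * N.descFactorial l := by
  rw [Nat.succ_descFactorial_succ, Nat.descFactorial_succ, ← add_mul]
  rcases le_or_gt l N with h | h
  · congr 1
    omega
  · simp [Nat.descFactorial_of_lt h]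

/-- The multisets of type `s` over a palette `A` form a finite set with
`|A| (|A| - 1) ⋯ (|A| - ℓ + 1) / ∏ d_k!` elements. By induction on `A`: a new color `a` is either
unused or has one of the multiplicities `k` occurring in `s`, in which case the remaining colors
form a multiset of type `s.erase k`. -/
lemma exists_finset_multType {α : Type*} [DecidableEq α] (A : Finset α) :
    ∀ s : Multiset ℕ, 0 ∉ s → ∃ F : Finset (Multiset α),
      (∀ M, M ∈ F ↔ (∀ c ∈ M, c ∈ A) ∧ multType M = s) ∧
      F.card * multFact s = A.card.descFactorial s.card := by
  induction A using Finset.induction_on with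
  | empty =>
    intro s hs
    have key : ∀ M : Multiset α, (∀ c ∈ M, c ∈ (∅ : Finset α)) ↔ M = 0 := fun M => by
      simp [Multiset.eq_zero_iff_forall_notMem]
    rcases eq_or_ne s 0 with rfl | h
    · refine ⟨{0}, fun M => ?_, by simp [multFact]⟩
      rw [key, Finset.mem_singleton]
      refine ⟨?_, And.left⟩
      rintro rfl
      simp [multType]
    · refine ⟨∅, fun M => ?_, ?_⟩
      · rw [key]
        simp only [Finset.notMem_empty, false_iff]
        rintro ⟨rfl, h'⟩
        exact h (by rw [← h']; simp [multType])
      · have : 0 < s.card := Multiset.card_pos.2 h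
        simp [Nat.descFactorial_of_lt this]
  | insert a A ha ih =>
    intro s hs
    have hs' : ∀ k, 0 ∉ s.erase k := fun k h => hs (Multiset.mem_of_mem_erase h)
    obtain ⟨F₀, hF₀, hc₀⟩ := ih s hs
    choose F hF hcF using fun k => ih (s.erase k) (hs' k)
    have hna : ∀ k, ∀ M ∈ F k, a ∉ M := fun k M hM h => ha (((hF k M).1 hM).1 a h)
    let E : ℕ → Finset (Multiset α) := fun k => (F k).image (· + Multiset.replicate k a)
    have hcount : ∀ k, ∀ M ∈ E k, M.count a = k := by
      intro k M hM
      obtain ⟨M', hM', rfl⟩ := Finset.mem_image.1 hM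
      simp [Multiset.count_eq_zero_of_notMem (hna k M' hM')]
    have hEcard : ∀ k, (E k).card = (F k).card := fun k =>
      Finset.card_image_of_injective _ (add_left_injective _)
    have hdisj : Disjoint F₀ (s.toFinset.biUnion E) := by
      rw [Finset.disjoint_left]
      intro M h0 h1
      obtain ⟨k, hk, hM⟩ := Finset.mem_biUnion.1 h1
      have h2 := hcount k M hM
      rw [Multiset.count_eq_zero_of_notMem fun h => ha (((hF₀ M).1 h0).1 a h)] at h2
      exact hs (by rw [h2]; simpa using hk)
    refine ⟨F₀ ∪ s.toFinset.biUnion E, fun M => ?_, ?_⟩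
    · rw [Finset.mem_union, Finset.mem_biUnion, hF₀]
      constructor
      · rintro (⟨h1, h2⟩ | ⟨k, hk, hM⟩)
        · exact ⟨fun c hc => Finset.mem_insert_of_mem (h1 c hc), h2⟩
        · obtain ⟨M', hM', rfl⟩ := Finset.mem_image.1 hM
          have hks : k ∈ s := by simpa using hk
          have hk0 : k ≠ 0 := by
            rintro rfl
            exact hs hks
          refine ⟨fun c hc => ?_, ?_⟩
          · rcases Multiset.mem_add.1 hc with h | h
            · exact Finset.mem_insert_of_mem (((hF k M').1 hM').1 c h)
            · rw [Multiset.eq_of_mem_replicate h]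
              exact Finset.mem_insert_self _ _
          · rw [multType_add_replicate _ _ (hna k M' hM') k hk0, ((hF k M').1 hM').2,
              Multiset.cons_erase hks]
      · rintro ⟨h1, h2⟩
        by_cases haM : a ∈ M
        · right
          have hk0 : M.count a ≠ 0 := (Multiset.count_pos.2 haM).ne'
          have hdec : M.filter (· ≠ a) + Multiset.replicate (M.count a) a = M := by
            rw [← Multiset.filter_eq', add_comm]
            exact Multiset.filter_add_not _ M
          have hnot : a ∉ M.filter (· ≠ a) := by simp
          have ht := multType_add_replicate _ a hnot _ hk0
          rw [hdec, h2] at ht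
          refine ⟨M.count a, by simp [ht], Finset.mem_image.2 ⟨M.filter (· ≠ a), ?_, hdec⟩⟩
          rw [hF]
          refine ⟨fun c hc => ?_, ?_⟩
          · obtain ⟨hcM, hca⟩ := Multiset.mem_filter.1 hc
            exact Finset.mem_of_mem_insert_of_ne (h1 c hcM) hca
          · conv_rhs => rw [ht, Multiset.erase_cons_head]
        · left
          refine ⟨fun c hc => Finset.mem_of_mem_insert_of_ne (h1 c hc) ?_, h2⟩
          rintro rfl
          exact haM hc
    · have hpair : ∀ k ∈ s.toFinset, ∀ j ∈ s.toFinset, k ≠ j → Disjoint (E k) (E j) := by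
        intro k _ j _ hkj
        rw [Finset.disjoint_left]
        intro M h1 h2
        exact hkj ((hcount k M h1).symm.trans (hcount j M h2))
      rw [Finset.card_union_of_disjoint hdisj, Finset.card_biUnion hpair, add_mul, hc₀,
        Finset.sum_mul, Finset.card_insert_of_notMem ha]
      have hterm : ∀ k ∈ s.toFinset, (E k).card * multFact s =
          s.count k * A.card.descFactorial (s.card - 1) := by
        intro k hk
        have hks : k ∈ s := by simpa using hk
        rw [hEcard, multFact_erase s k hks, mul_left_comm, hcF, Multiset.card_erase_of_mem hks,
          Nat.pred_eq_sub_one]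
      rw [Finset.sum_congr rfl hterm, ← Finset.sum_mul, Multiset.toFinset_sum_count_eq]
      rcases h : s.card with _ | l
      · simp
      · rw [succ_descFactorial_eq_add, Nat.add_sub_cancel]

/-! ### Colorings with prescribed types -/

/-- The sum of the lengths of the prescribed types at the earlier neighbors of `j`. -/
noncomputable def earlier {n : ℕ} (G : SimpleGraph (Fin n)) (s : Fin n → Multiset ℕ)
    (j : Fin n) : ℤ :=
  ∑ i ∈ Finset.univ.filter (fun i : Fin n => i < j ∧ G.Adj i j), ((s i).card : ℤ)

lemma earlier_castSucc {n : ℕ} (G : SimpleGraph (Fin (n + 1))) (s : Fin (n + 1) → Multiset ℕ)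
    (j : Fin n) : earlier G s j.castSucc =
      earlier (G.comap Fin.castSucc) (fun i => s i.castSucc) j := by
  simp only [earlier, Finset.sum_filter, Fin.sum_univ_castSucc]
  have : ¬ (Fin.last n < j.castSucc) := not_lt.2 (Fin.le_last _)
  simp [this]

lemma earlier_last {n : ℕ} (G : SimpleGraph (Fin (n + 1))) (s : Fin (n + 1) → Multiset ℕ) :
    earlier G s (Fin.last n) =
      ∑ i ∈ Finset.univ.filter (fun i : Fin n => G.Adj i.castSucc (Fin.last n)),
        ((s i.castSucc).card : ℤ) := by
  simp only [earlier, Finset.sum_filter, Fin.sum_univ_castSucc]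
  simp [Fin.castSucc_lt_last]

lemma cast_descFactorial_sub (q b l : ℕ) (h : b ≤ q) :
    (((q - b).descFactorial l : ℕ) : ℚ) =
      ∏ i ∈ Finset.range l, (((((q : ℤ) - (b : ℤ)) : ℤ) : ℚ) - (i : ℚ)) := by
  induction l with
  | zero => simp
  | succ l ih =>
    rw [Nat.descFactorial_succ, Finset.prod_range_succ, ← ih, Nat.cast_mul, mul_comm]
    rcases le_or_gt l (q - b) with hl | hl
    · rw [Nat.cast_sub hl, Nat.cast_sub h]
      push_cast
      ring
    · simp [Nat.descFactorial_of_lt hl]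

/-- The colorings with prescribed types `s v` are counted by coloring the vertices in increasing
order. In the inductive step, the earlier neighbors of the last vertex form a clique, so the number
`b` of colors they use is the sum of their numbers of distinct colors. In particular `b ≤ q` as
soon as a coloring of the earlier vertices exists; otherwise both sides vanish by induction. -/
lemma exists_finset_coloring (q n : ℕ) : ∀ (G : SimpleGraph (Fin n))
    (_ : ∀ k i j : Fin n, i < k → j < k → G.Adj i k → G.Adj j k → i ≠ j → G.Adj i j)
    (s : Fin n → Multiset ℕ) (_ : ∀ v, 0 ∉ s v),
    ∃ F : Finset (Fin n → Multiset (Fin q)),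
      (∀ f, f ∈ F ↔ (∀ v, multType (f v) = s v) ∧
        ∀ u v : Fin n, G.Adj u v → ∀ c : Fin q, c ∈ f u → c ∉ f v) ∧
      (F.card : ℚ) = ∏ j, (∏ i ∈ Finset.range (s j).card,
        ((((q : ℤ) - earlier G s j : ℤ) : ℚ) - (i : ℚ))) / (multFact (s j) : ℚ) := by
  induction n with
  | zero =>
    intro G _ s _
    exact ⟨Finset.univ, fun f => ⟨fun _ => ⟨fun v => v.elim0, fun u => u.elim0⟩, fun _ => Finset.mem_univ f⟩,
      by simp⟩
  | succ n ih =>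
    intro G hG s hs
    obtain ⟨F, hF, hcF⟩ := ih (G.comap Fin.castSucc)
      (fun k i j hi hj h1 h2 hne => hG k.castSucc i.castSucc j.castSucc
        (Fin.castSucc_lt_castSucc_iff.2 hi) (Fin.castSucc_lt_castSucc_iff.2 hj) h1 h2
        (fun h => hne (Fin.castSucc_injective _ h)))
      (fun i => s i.castSucc) (fun v => hs _)
    let N : Finset (Fin n) :=
      Finset.univ.filter (fun i : Fin n => G.Adj i.castSucc (Fin.last n))
    let U : (Fin n → Multiset (Fin q)) → Finset (Fin q) := fun f =>
      N.biUnion (fun i => (f i).toFinset)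
    choose E hE hcE using fun f : Fin n → Multiset (Fin q) =>
      exists_finset_multType (Finset.univ \ U f) (s (Fin.last n)) (hs _)
    let b : ℕ := ∑ i ∈ N, (s i.castSucc).card
    have hU : ∀ f ∈ F, (U f).card = b := by
      intro f hf
      obtain ⟨h1, h2⟩ := (hF f).1 hf
      rw [Finset.card_biUnion]
      · exact Finset.sum_congr rfl fun i _ => by rw [← card_multType, h1]
      · intro i hi j hj hij
        have hadj : (G.comap Fin.castSucc).Adj i j :=
          hG (Fin.last n) _ _ (Fin.castSucc_lt_last i) (Fin.castSucc_lt_last j)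
            (Finset.mem_filter.1 hi).2 (Finset.mem_filter.1 hj).2
            (fun h => hij (Fin.castSucc_injective _ h))
        rw [Function.onFun, Finset.disjoint_left]
        intro c hc hc'
        exact h2 i j hadj c (by simpa using hc) (by simpa using hc')
    have hb : earlier G s (Fin.last n) = (b : ℤ) := by
      rw [earlier_last]
      push_cast [b]
      rfl
    let X : ℚ := (∏ i ∈ Finset.range (s (Fin.last n)).card,
        ((((q : ℤ) - (b : ℤ) : ℤ) : ℚ) - (i : ℚ))) / (multFact (s (Fin.last n)) : ℚ)
    have hX : ∀ f ∈ F, ((E f).card : ℚ) = X := by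
      intro f hf
      have hbq : b ≤ q := by
        rw [← hU f hf]
        simpa using Finset.card_le_univ (U f)
      have hpos : (multFact (s (Fin.last n)) : ℚ) ≠ 0 := by
        exact_mod_cast (multFact_pos _).ne'
      rw [eq_div_iff hpos, ← cast_descFactorial_sub q b _ hbq]
      have h := hcE f
      rw [← Finset.compl_eq_univ_sdiff, Finset.card_compl, hU f hf, Fintype.card_fin] at h
      exact_mod_cast h
    let snoc : (Fin n → Multiset (Fin q)) → Multiset (Fin q) → (Fin (n + 1) → Multiset (Fin q)) :=
      fun f M => Fin.snoc (α := fun _ => Multiset (Fin q)) f M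
    have snoc_last : ∀ f M, snoc f M (Fin.last n) = M := fun f M => by simp [snoc]
    have snoc_cast : ∀ f M i, snoc f M (Fin.castSucc i) = f i := fun f M i => by simp [snoc]
    refine ⟨F.biUnion fun f => (E f).image (snoc f), fun g => ?_, ?_⟩
    · rw [Finset.mem_biUnion]
      constructor
      · rintro ⟨f, hf, hg⟩
        obtain ⟨M, hM, rfl⟩ := Finset.mem_image.1 hg
        obtain ⟨h1, h2⟩ := (hF f).1 hf
        obtain ⟨h3, h4⟩ := (hE f M).1 hM
        have h5 : ∀ i : Fin n, G.Adj i.castSucc (Fin.last n) → ∀ c ∈ f i, c ∉ M := by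
          intro i hi c hc hcM
          have := h3 c hcM
          simp only [Finset.mem_sdiff, Finset.mem_univ, true_and, U, Finset.mem_biUnion,
            not_exists, not_and] at this
          exact this i (by simpa [N] using hi) (by simpa using hc)
        refine ⟨fun v => ?_, fun u v => ?_⟩
        · induction v using Fin.lastCases with
          | last => rw [snoc_last, h4]
          | cast i => rw [snoc_cast, h1]
        · induction u using Fin.lastCases with
          | last =>
            induction v using Fin.lastCases with
            | last => exact fun h => (G.loopless.irrefl _ h).elim
            | cast j =>
              intro h c
              rw [snoc_last, snoc_cast]
              exact fun hc hc' => h5 j h.symm c hc' hc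
          | cast i =>
            induction v using Fin.lastCases with
            | last =>
              intro h c
              rw [snoc_last, snoc_cast]
              exact h5 i h c
            | cast j =>
              intro h c
              rw [snoc_cast, snoc_cast]
              exact h2 i j h c
      · rintro ⟨h1, h2⟩
        refine ⟨fun i => g i.castSucc, (hF _).2 ⟨fun v => h1 _, fun u v h => h2 _ _ h⟩,
          Finset.mem_image.2 ⟨g (Fin.last n), (hE _ _).2 ⟨fun c hc => ?_, h1 _⟩, ?_⟩⟩
        · simp only [Finset.mem_sdiff, Finset.mem_univ, true_and, U, Finset.mem_biUnion,
            not_exists, not_and]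
          intro i hi hci
          exact h2 _ _ (Finset.mem_filter.1 hi).2 c (by simpa using hci) hc
        · funext v
          induction v using Fin.lastCases with
          | last => rw [snoc_last]
          | cast i => rw [snoc_cast]
    · rw [Finset.card_biUnion]
      · have hi : ∀ f ∈ F, (((E f).image (snoc f)).card : ℚ) = X := by
          intro f hf
          rw [Finset.card_image_of_injective, hX f hf]
          intro M M' h
          have := congrFun h (Fin.last n)
          rwa [snoc_last, snoc_last] at this
        rw [Nat.cast_sum, Finset.sum_congr rfl hi, Finset.sum_const, nsmul_eq_mul, hcF,
          Fin.prod_univ_castSucc, hb]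
        simp only [earlier_castSucc]
        rfl
      · intro f _ f' _ hne
        rw [Function.onFun, Finset.disjoint_left]
        intro g hg hg'
        obtain ⟨M, _, rfl⟩ := Finset.mem_image.1 hg
        obtain ⟨M', _, h⟩ := Finset.mem_image.1 hg'
        refine hne (funext fun i => ?_)
        have := congrFun h i.castSucc
        rw [snoc_cast, snoc_cast] at this
        exact this.symm

/-! ### Marked multi-colorings -/

theorem card_markedColoring_peo (n : ℕ) (G : SimpleGraph (Fin n))
    (hpeo : ∀ k i j : Fin n, i < k → j < k → G.Adj i k → G.Adj j k → i ≠ j → G.Adj i j)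
    (Vsp : Finset (Fin n)) (m : Fin n → ℕ) (q : ℕ) (hq : 0 < q) :
    (Nat.card {f : Fin n → Multiset (Fin q) //
        (∀ v ∉ Vsp, (f v).Nodup) ∧ (∀ v, Multiset.card (f v) = m v) ∧
        ∀ u v : Fin n, G.Adj u v → ∀ c : Fin q, c ∈ f u → c ∉ f v} : ℚ)
      = ∑ P ∈ Finset.univ.filter
            (fun P : ∀ i : Fin n, Nat.Partition (m i) =>
              ∀ i ∉ Vsp, (P i).parts = Multiset.replicate (m i) 1),
          ∏ j ∈ Finset.univ.filter (fun j : Fin n => m j ≠ 0),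
            zChoose ((q : ℤ) -
                ∑ i ∈ Finset.univ.filter (fun i : Fin n => i < j ∧ G.Adj i j),
                  ((P i).parts.card : ℤ)) ((P j).parts.card)
              * ((P j).parts.card.factorial : ℚ)
              / ∏ k ∈ Finset.Icc 1 (m j), (((P j).parts.count k).factorial : ℚ) := by
  have hz : ∀ P : ∀ i : Fin n, Nat.Partition (m i), ∀ v, 0 ∉ (P v).parts :=
    fun P v h => lt_irrefl 0 ((P v).parts_pos h)
  choose F hF hcF using fun P : ∀ i : Fin n, Nat.Partition (m i) =>
    exists_finset_coloring q n G hpeo (fun i => (P i).parts) (hz P)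
  have hprod : ∀ P : ∀ i : Fin n, Nat.Partition (m i), ((F P).card : ℚ) =
      ∏ j ∈ Finset.univ.filter (fun j : Fin n => m j ≠ 0),
            zChoose ((q : ℤ) -
                ∑ i ∈ Finset.univ.filter (fun i : Fin n => i < j ∧ G.Adj i j),
                  ((P i).parts.card : ℤ)) ((P j).parts.card)
              * ((P j).parts.card.factorial : ℚ)
              / ∏ k ∈ Finset.Icc 1 (m j), (((P j).parts.count k).factorial : ℚ) := by
    intro P
    rw [hcF, Finset.prod_filter]
    refine Finset.prod_congr rfl fun j _ => ?_
    split_ifs with hj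
    · have hsub : (P j).parts.toFinset ⊆ Finset.Icc 1 (m j) := by
        intro k hk
        have hk' : k ∈ (P j).parts := by simpa using hk
        rw [Finset.mem_Icc]
        refine ⟨(P j).parts_pos hk', ?_⟩
        have := Multiset.single_le_sum (fun _ _ => Nat.zero_le _) k hk'
        rwa [(P j).parts_sum] at this
      rw [multFact_eq_of_subset _ _ hsub, zChoose,
        div_mul_cancel₀ _ (by exact_mod_cast Nat.factorial_ne_zero _)]
      push_cast [earlier]
      rfl
    -- the empty partition contributes the factor `1`
    · have h0 : (P j).parts = 0 := by
        by_contra hne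
        obtain ⟨k, hk⟩ := Multiset.exists_mem_of_ne_zero hne
        have := Multiset.single_le_sum (fun _ _ => Nat.zero_le _) k hk
        rw [(P j).parts_sum] at this
        have := (P j).parts_pos hk
        omega
      simp [h0, multFact]
  rw [← Finset.sum_congr rfl fun P _ => hprod P, ← Nat.cast_sum, ← Finset.card_biUnion]
  · congr 1
    rw [Nat.subtype_card]
    intro f
    simp only [Finset.mem_biUnion, Finset.mem_filter, Finset.mem_univ, true_and, hF]
    constructor
    · rintro ⟨P, hP, h1, h2⟩
      have hcard : ∀ v, (f v).card = m v := fun v => by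
        rw [← sum_multType, h1, (P v).parts_sum]
      refine ⟨fun v hv => ?_, hcard, h2⟩
      rw [nodup_iff_multType, hcard, h1, hP v hv]
    · rintro ⟨h1, h2, h3⟩
      refine ⟨fun v => ⟨multType (f v), fun {k} hk => Nat.pos_of_ne_zero ?_, ?_⟩,
        fun v hv => ?_, fun v => rfl, h3⟩
      · rintro rfl
        exact zero_notMem_multType _ hk
      · rw [sum_multType, h2]
      · change multType (f v) = _
        rw [(nodup_iff_multType _).1 (h1 v hv), h2]
  · intro P _ P' _ hne
    rw [Function.onFun, Finset.disjoint_left]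
    intro f hf hf'
    refine hne (funext fun i => Nat.Partition.ext ?_)
    rw [← ((hF P f).1 hf).1 i, ← ((hF P' f).1 hf').1 i]
end

section
/- Let G be a graph on vertex set {1,…,n} such that the ordering 1 < 2 < ⋯ < n is a perfect elimination ordering. Let m = (m_1,…,m_n) be a tuple of nonnegative integers with supp(m) = {i_1 < i_2 < ⋯ < i_N}. Then for every positive integer q, the number of multi-colorings of G associated to m using at most q colors (i.e., functions f assigning to each vertex v a subset f(v) ⊆ {1,…,q} with |f(v)| = m_v such that f(u) ∩ f(v) = ∅ for every edge {u,v}) equals Π_{r=1}^{N} C(q − Σ_{s<r, i_s ∈ N_G(i_r)} m_{i_s}, m_{i_r}), where C(t,k) = t(t−1)⋯(t−k+1)/k! is the generalized binomial coefficient of an integer t. -/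
/-!
Colour the vertices in the order `1 < 2 < ⋯ < n`. When the last vertex `k` is reached, its
neighbours form a clique, so in any multi-coloring `f` of the earlier vertices their colour sets
are pairwise disjoint and cover exactly `s = ∑ m i` colours. The colour set of `k` is then any
`m k`-subset of the remaining `q - s` colours, so `f` has `(q - s).choose (m k)` extensions
whatever `f` is (`card_extensions`). Induction on `n` gives the product.

If `f` exists then `s ≤ q`, and the generalized binomial coefficient is the ordinary one; if no
`f` exists, both sides vanish by the induction hypothesis, so the value of the generalized binomial
coefficient at negative arguments never matters.

In the induction the product runs over all vertices and the sums over all earlier neighbours: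
vertices with `m i = 0` contribute the factor `1` and the summand `0`.
-/

open scoped Classical

theorem zChoose_natCast (t k : ℕ) : zChoose (t : ℤ) k = (t.choose k : ℚ) := by
  rw [zChoose, Nat.choose_eq_descFactorial_div_factorial,
    Nat.cast_div (Nat.factorial_dvd_descFactorial t k) (by positivity),
    ← descPochhammer_eval_eq_descFactorial ℚ, descPochhammer_eval_eq_prod_range]
  simp

/-- `f` assigns `m v` of the `q` colours to each vertex `v`, disjointly along edges. -/
def IsMultiColoring {n : ℕ} (G : SimpleGraph (Fin n)) (m : Fin n → ℕ) (q : ℕ)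
    (f : Fin n → Finset (Fin q)) : Prop :=
  (∀ v, (f v).card = m v) ∧ ∀ u v : Fin n, G.Adj u v → Disjoint (f u) (f v)

/-- The number of `k`-sets of colours avoiding every colour used on the clique `A` is the same for
all multi-colorings `f`: the colour sets of the vertices of `A` are pairwise disjoint, so exactly
`q - ∑ i ∈ A, m i` colours remain. -/
theorem card_extensions {V : Type*} (G : SimpleGraph V) (A : Finset V)
    (hA : ∀ i ∈ A, ∀ j ∈ A, i ≠ j → G.Adj i j) (m : V → ℕ) (q k : ℕ)
    (f : V → Finset (Fin q)) (hc : ∀ v, (f v).card = m v)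
    (hd : ∀ u v, G.Adj u v → Disjoint (f u) (f v)) :
    (Nat.card {S : Finset (Fin q) // S.card = k ∧ ∀ i ∈ A, Disjoint (f i) S} : ℚ)
      = zChoose ((q : ℤ) - ∑ i ∈ A, (m i : ℤ)) k := by
  have hU : (A.biUnion f).card = ∑ i ∈ A, m i := by
    rw [Finset.card_biUnion fun i hi j hj hij => hd i j (hA i hi j hj hij)]
    exact Finset.sum_congr rfl fun i _ => hc i
  have hle : ∑ i ∈ A, m i ≤ q := by
    rw [← hU]; simpa using Finset.card_le_univ (A.biUnion f)
  have hset : ∀ S : Finset (Fin q), (S.card = k ∧ ∀ i ∈ A, Disjoint (f i) S) ↔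
      S ∈ ((A.biUnion f)ᶜ).powersetCard k := by
    intro S
    rw [Finset.mem_powersetCard, Finset.subset_compl_iff_disjoint_left,
      Finset.disjoint_biUnion_left, and_comm]
  rw [Nat.card_congr (Equiv.subtypeEquivRight hset), Nat.card_eq_fintype_card, Fintype.card_coe,
    Finset.card_powersetCard, Finset.card_compl, Fintype.card_fin, hU, ← zChoose_natCast,
    Nat.cast_sub hle]
  push_cast
  rfl

/-- A multi-coloring of `Fin (n + 1)` is a multi-coloring of the first `n` vertices together with
a compatible colour set for the last vertex. -/
noncomputable def multiColoringEquiv {n : ℕ} (G : SimpleGraph (Fin (n + 1)))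
    (m : Fin (n + 1) → ℕ) (q : ℕ) :
    {f // IsMultiColoring G m q f} ≃
      Σ f : {f // IsMultiColoring (G.comap Fin.castSucc) (fun i => m i.castSucc) q f},
        {S : Finset (Fin q) // S.card = m (Fin.last n) ∧
          ∀ i ∈ Finset.univ.filter (fun i : Fin n => G.Adj i.castSucc (Fin.last n)),
            Disjoint (f.1 i) S} where
  toFun f := ⟨⟨fun i => f.1 i.castSucc, fun v => f.2.1 _, fun u v h => f.2.2 _ _ h⟩,
    f.1 (Fin.last n), f.2.1 _, fun i hi => f.2.2 _ _ (Finset.mem_filter.1 hi).2⟩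
  invFun p := ⟨Fin.snoc (α := fun _ => Finset (Fin q)) p.1.1 p.2.1, by
    obtain ⟨⟨f, hc, hd⟩, S, hS, hSd⟩ := p
    refine ⟨fun v => ?_, fun u v h => ?_⟩
    · induction v using Fin.lastCases with
      | last => simpa using hS
      | cast i => simpa using hc i
    · induction u using Fin.lastCases with
      | last =>
        induction v using Fin.lastCases with
        | last => exact absurd rfl h.ne
        | cast j => simpa using (hSd j (by simpa using h.symm)).symm
      | cast i =>
        induction v using Fin.lastCases with
        | last => simpa using hSd i (by simpa using h)
        | cast j => simpa using hd i j h⟩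
  left_inv f := by
    apply Subtype.ext
    funext v
    induction v using Fin.lastCases <;> simp
  right_inv p := by
    obtain ⟨⟨f, hf⟩, S, hS⟩ := p
    have h : (⟨fun i => Fin.snoc (α := fun _ => Finset (Fin q)) f S i.castSucc,
        by simpa using hf⟩ : {f // IsMultiColoring (G.comap Fin.castSucc)
          (fun i => m i.castSucc) q f}) = ⟨f, hf⟩ := by simp
    refine Sigma.subtype_ext h ?_
    simp

theorem card_isMultiColoring (n : ℕ) (G : SimpleGraph (Fin n))
    (hpeo : ∀ k i j : Fin n, i < k → j < k → G.Adj i k → G.Adj j k → i ≠ j → G.Adj i j)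
    (m : Fin n → ℕ) (q : ℕ) :
    (Nat.card {f // IsMultiColoring G m q f} : ℚ)
      = ∏ j, zChoose ((q : ℤ) -
          ∑ i ∈ Finset.univ.filter (fun i : Fin n => i < j ∧ G.Adj i j), (m i : ℤ)) (m j) := by
  induction n with
  | zero =>
    have : Unique {f // IsMultiColoring G m q f} :=
      { default := ⟨fun i => i.elim0, fun i => i.elim0, fun i => i.elim0⟩
        uniq := fun f => Subtype.ext (Subsingleton.elim _ _) }
    simp
  | succ n ih =>
    have ih' := ih (G.comap Fin.castSucc)
      (fun k i j hi hj hik hjk hij => hpeo k.castSucc i.castSucc j.castSucc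
        (by simpa using hi) (by simpa using hj) hik hjk (by simpa using hij))
      (fun i => m i.castSucc)
    rw [Nat.card_congr (multiColoringEquiv G m q), Nat.card_sigma, Nat.cast_sum,
      Finset.sum_congr rfl fun f _ => card_extensions (G.comap Fin.castSucc) _
        (fun i hi j hj hij => hpeo (Fin.last n) _ _ (Fin.castSucc_lt_last i)
          (Fin.castSucc_lt_last j) (Finset.mem_filter.1 hi).2 (Finset.mem_filter.1 hj).2
          (by simpa using hij)) _ q _ f.1 f.2.1 f.2.2,
      Finset.sum_const, nsmul_eq_mul, Finset.card_univ, ← Nat.card_eq_fintype_card, ih',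
      Fin.prod_univ_castSucc]
    congr 1
    · refine Finset.prod_congr rfl fun j _ => ?_
      simp [Finset.sum_filter, Fin.sum_univ_castSucc, (Fin.le_last _).not_gt]
    · simp [Finset.sum_filter, Fin.sum_univ_castSucc, Fin.castSucc_lt_last]

theorem card_multiColoring_peo (n : ℕ) (G : SimpleGraph (Fin n))
    (hpeo : ∀ k i j : Fin n, i < k → j < k → G.Adj i k → G.Adj j k → i ≠ j → G.Adj i j)
    (m : Fin n → ℕ) (q : ℕ) (hq : 0 < q) :
    (Nat.card {f : Fin n → Finset (Fin q) //
        (∀ v, (f v).card = m v) ∧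
        ∀ u v : Fin n, G.Adj u v → Disjoint (f u) (f v)} : ℚ)
      = ∏ j ∈ Finset.univ.filter (fun j : Fin n => m j ≠ 0),
          zChoose ((q : ℤ) -
              ∑ i ∈ Finset.univ.filter (fun i : Fin n => i < j ∧ G.Adj i j ∧ m i ≠ 0),
                (m i : ℤ)) (m j) := by
  refine (card_isMultiColoring n G hpeo m q).trans ?_
  rw [Finset.prod_filter]
  refine Finset.prod_congr rfl fun j _ => ?_
  split_ifs with hj
  · congr 2
    rw [Finset.sum_filter, Finset.sum_filter]
    refine Finset.sum_congr rfl fun i _ => ?_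
    by_cases hi : m i = 0 <;> simp [hi]
  · rw [not_not.1 hj]
    simp [zChoose]
end

section
/- Let n, p ≥ 1, and for each s ∈ {1,…,p} let H_s be given by a finite list of integer linear forms L_s^j(x) = a^s_{1j}x_1 + ⋯ + a^s_{nj}x_n (1 ≤ j ≤ r_s). Fix S ⊆ {1,…,n} and a tuple m = (m_1,…,m_n) of positive integers. For a prime q, let N(q) denote the number of n-tuples (C_1,…,C_n) where each C_i is a multiset of elements of the field 𝔽_q = ℤ/qℤ of cardinality m_i, C_i has no repeated elements whenever i ∉ S, and there is no x = (x_1,…,x_n) ∈ 𝔽_q^n with x_j belonging to the underlying set of C_j for all j and with L_s^j(x) = 0 in 𝔽_q for all 1 ≤ j ≤ r_s for some s ∈ {1,…,p}. Then there exist a polynomial P with rational coefficients and an integer N such that N(q) = P(q) for every prime q > N. -/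
/-!
Choosing an ordering of each multiset turns a marked coloring into a point
`f ∈ ∏ i, (Fin (m i) → 𝔽_q)`, unique up to the group `G = ∏ i, Perm (Fin (m i))`. By Burnside's
lemma (`card_mul_card_eq_sum_fixed`), `|G| · N(q)` is the sum over `g ∈ G` of the number of
admissible `f` fixed by `g`. Being admissible and fixed by `g` is a Boolean combination of
vanishing conditions of finitely many integer linear forms in the coordinates of `f`: the
differences `f i k - f i l` express repetitions and invariance, and the forms `L_s^j`, evaluated at
every choice of one entry from each `C_i`, express the arrangement condition.

Such a Boolean combination is counted by a polynomial for large primes (`evPoly_boolean`). It is a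
disjoint union of sets on which some forms vanish and others do not, and removing the
nonvanishing conditions one by one (`evPoly_vanish_nonvanish`) reduces the count to the number of
common zeros of a set of forms. The latter is a power of `q` with exponent independent of `q`
(`exists_card_zeros_mul_pow`): adding a form `b` to a set `A` does nothing modulo large `q` if `b`
lies in the rational span of `A`; otherwise an integer vector `v` killed by `A` with `b(v) ≠ 0`
shows that the number of common zeros is divided by exactly `q` as soon as `q ∤ b(v)`.
-/

/-! ### Eventually polynomial sequences -/

/-- The sequence `c` agrees with a rational polynomial at all sufficiently large primes. -/
def EvPoly (c : ℕ → ℚ) : Prop :=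
  ∃ (P : Polynomial ℚ) (N : ℕ), ∀ q : ℕ, q.Prime → N < q → c q = P.eval (q : ℚ)

lemma EvPoly.sub {c d : ℕ → ℚ} (hc : EvPoly c) (hd : EvPoly d) :
    EvPoly (fun q => c q - d q) := by
  obtain ⟨P, N, h⟩ := hc
  obtain ⟨Q, M, k⟩ := hd
  refine ⟨P - Q, max N M, fun q hq hlt => ?_⟩
  rw [Polynomial.eval_sub, ← h q hq (by omega), ← k q hq (by omega)]

lemma EvPoly.sum {κ : Type*} (s : Finset κ) {c : κ → ℕ → ℚ} (hc : ∀ i, EvPoly (c i)) :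
    EvPoly (fun q => ∑ i ∈ s, c i q) := by
  choose P N h using hc
  refine ⟨∑ i ∈ s, P i, s.sup N, fun q hq hlt => ?_⟩
  rw [Polynomial.eval_finsetSum]
  exact Finset.sum_congr rfl fun i hi => h i q hq (lt_of_le_of_lt (Finset.le_sup hi) hlt)

lemma EvPoly.const_mul {c : ℕ → ℚ} (a : ℚ) (hc : EvPoly c) : EvPoly (fun q => a * c q) := by
  obtain ⟨P, N, h⟩ := hc
  refine ⟨Polynomial.C a * P, N, fun q hq hlt => ?_⟩
  rw [Polynomial.eval_C_mul, ← h q hq hlt]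

lemma EvPoly.congr {c d : ℕ → ℚ} (hc : EvPoly c) (h : ∀ q : ℕ, q.Prime → d q = c q) :
    EvPoly d := by
  obtain ⟨P, N, k⟩ := hc
  exact ⟨P, N, fun q hq hlt => (h q hq).trans (k q hq hlt)⟩

/-! ### Counting zeros of integer linear forms modulo large primes -/

/-- The value modulo `q` of the integer linear form with coefficients `l` at `x`. -/
def formEval {T : Type*} [Fintype T] (q : ℕ) (l : T → ℤ) (x : T → ZMod q) : ZMod q :=
  ∑ t, (l t : ZMod q) * x t

section Forms

variable {T ι : Type*} [Fintype T]

lemma formEval_add_smul (q : ℕ) (l : T → ℤ) (x y : T → ZMod q) (c : ZMod q) :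
    formEval q l (x + c • y) = formEval q l x + c * formEval q l y := by
  simp only [formEval, Finset.mul_sum, ← Finset.sum_add_distrib, Pi.add_apply, Pi.smul_apply,
    smul_eq_mul]
  exact Finset.sum_congr rfl fun t _ => by ring

lemma formEval_intCast (q : ℕ) (l v : T → ℤ) :
    formEval q l (fun t => (v t : ZMod q)) = ((∑ t, l t * v t : ℤ) : ZMod q) := by
  simp [formEval]

lemma intCast_ne_zero_of_lt {q : ℕ} {d : ℤ} (hd : d ≠ 0) (hlt : d.natAbs < q) :
    (d : ZMod q) ≠ 0 := by
  rw [Ne, ZMod.intCast_zmod_eq_zero_iff_dvd _ q]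
  intro h
  have := Int.natAbs_dvd_natAbs.mpr h
  have := Nat.le_of_dvd (Int.natAbs_pos.mpr hd) this
  simp at this
  omega

/-- Some nonzero integer multiple of a vector in the rational span of integer forms vanishes at
all common zeros of these forms, over every `ZMod q`. -/
lemma exists_multiple_vanishing (L : ι → T → ℤ) (A : Finset ι) (w : T → ℚ)
    (hw : w ∈ Submodule.span ℚ ((fun i t => (L i t : ℚ)) '' (A : Set ι))) :
    ∃ (d : ℤ) (u : T → ℤ), d ≠ 0 ∧ (∀ t, (u t : ℚ) = d * w t) ∧
      ∀ (q : ℕ) (x : T → ZMod q), (∀ i ∈ A, formEval q (L i) x = 0) → formEval q u x = 0 := by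
  induction hw using Submodule.span_induction with
  | mem w hw =>
    obtain ⟨i, hi, rfl⟩ := hw
    exact ⟨1, L i, one_ne_zero, by simp, fun q x hx => hx i hi⟩
  | zero => exact ⟨1, 0, one_ne_zero, by simp, fun q x _ => by simp [formEval]⟩
  | add w w' _ _ h h' =>
    obtain ⟨d, u, hd, hu, hx⟩ := h
    obtain ⟨d', u', hd', hu', hx'⟩ := h'
    refine ⟨d * d', fun t => d' * u t + d * u' t, mul_ne_zero hd hd', fun t => ?_,
      fun q x h0 => ?_⟩
    · push_cast
      rw [hu, hu', Pi.add_apply]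
      ring
    · have e : formEval q (fun t => d' * u t + d * u' t) x
          = d' * formEval q u x + d * formEval q u' x := by
        simp only [formEval, Finset.mul_sum, ← Finset.sum_add_distrib]
        exact Finset.sum_congr rfl fun t _ => by push_cast; ring
      rw [e, hx q x h0, hx' q x h0]
      simp
  | smul r w _ h =>
    obtain ⟨d, u, hd, hu, hx⟩ := h
    refine ⟨d * r.den, fun t => r.num * u t, mul_ne_zero hd (by exact_mod_cast r.den_ne_zero),
      fun t => ?_, fun q x h0 => ?_⟩
    · push_cast
      rw [hu, Pi.smul_apply, smul_eq_mul, ← Rat.mul_den_eq_num r]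
      ring
    · have e : formEval q (fun t => r.num * u t) x = r.num * formEval q u x := by
        simp only [formEval, Finset.mul_sum]
        exact Finset.sum_congr rfl fun t _ => by push_cast; ring
      rw [e, hx q x h0, mul_zero]

/-- A form outside the rational span of a set of forms is nonzero at some integer vector killed by
the set. -/
lemma exists_separating_vector (L : ι → T → ℤ) (A : Finset ι) (l : T → ℤ)
    (hl : (fun t => (l t : ℚ)) ∉
      Submodule.span ℚ ((fun i t => (L i t : ℚ)) '' (A : Set ι))) :
    ∃ v : T → ℤ, (∑ t, l t * v t) ≠ 0 ∧ ∀ i ∈ A, ∑ t, L i t * v t = 0 := by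
  classical
  obtain ⟨f, hf, hA⟩ := Submodule.exists_le_ker_of_notMem hl
  -- `v` is the coordinate vector of the functional `f`, with denominators cleared by `D`.
  set D : ℕ := ∏ t, (f (Pi.single t 1)).den with hD
  have hD0 : D ≠ 0 := Finset.prod_ne_zero_iff.mpr fun t _ => Rat.den_ne_zero _
  have hv : ∀ t, ∃ z : ℤ, (z : ℚ) = D * f (Pi.single t 1) := fun t => by
    obtain ⟨e, he⟩ : (f (Pi.single t 1)).den ∣ D := Finset.dvd_prod_of_mem _ (Finset.mem_univ t)
    refine ⟨e * (f (Pi.single t 1)).num, ?_⟩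
    rw [he]
    push_cast
    rw [← Rat.mul_den_eq_num (f (Pi.single t 1))]
    ring
  choose v hv using hv
  have key : ∀ k : T → ℤ, ((∑ t, k t * v t : ℤ) : ℚ) = D * f (fun t => (k t : ℚ)) := by
    intro k
    rw [LinearMap.pi_apply_eq_sum_univ f]
    push_cast
    rw [Finset.mul_sum]
    refine Finset.sum_congr rfl fun t _ => ?_
    rw [hv, smul_eq_mul]
    have : (fun j => if t = j then (1 : ℚ) else 0) = Pi.single t 1 := by
      ext j; simp [Pi.single_apply, eq_comm]
    rw [this]
    ring
  refine ⟨v, fun h => ?_, fun i hi => ?_⟩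
  · have := key l
    rw [h] at this
    simp [hD0, hf] at this
  · have := key (L i)
    rw [LinearMap.mem_ker.mp (hA (Submodule.subset_span ⟨i, hi, rfl⟩)), mul_zero] at this
    exact_mod_cast this

/-- For large primes `q`, the common zeros of integer linear forms form a subset of `𝔽_q^T` of
index `q ^ k`, where `k` does not depend on `q`. -/
lemma exists_card_zeros_mul_pow (L : ι → T → ℤ) (A : Finset ι) :
    ∃ k N : ℕ, ∀ q : ℕ, q.Prime → N < q →
      Nat.card {x : T → ZMod q // ∀ i ∈ A, formEval q (L i) x = 0} * q ^ k
        = q ^ Fintype.card T := by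
  classical
  induction A using Finset.induction_on with
  | empty =>
    refine ⟨0, 0, fun q hq _ => ?_⟩
    have := Fact.mk hq
    simp [Nat.card_eq_fintype_card, ZMod.card]
  | insert b A _ ih =>
    obtain ⟨k, N, ih⟩ := ih
    by_cases hb : (fun t => (L b t : ℚ)) ∈
        Submodule.span ℚ ((fun i t => (L i t : ℚ)) '' (A : Set ι))
    · obtain ⟨d, u, hd, hu, hx⟩ := exists_multiple_vanishing L A _ hb
      have hu' : ∀ t, u t = d * L b t := fun t => by exact_mod_cast hu t
      refine ⟨k, max N d.natAbs, fun q hq hlt => ?_⟩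
      have := Fact.mk hq
      rw [← ih q hq (by omega)]
      congr 1
      refine Nat.card_congr (Equiv.subtypeEquivRight fun x => ?_)
      simp only [Finset.forall_mem_insert]
      refine ⟨fun h => h.2, fun h => ⟨?_, h⟩⟩
      have h0 := hx q x h
      have e : formEval q u x = d * formEval q (L b) x := by
        simp only [formEval, Finset.mul_sum, hu']
        exact Finset.sum_congr rfl fun t _ => by push_cast; ring
      rw [e] at h0
      exact (mul_eq_zero.mp h0).resolve_left (intCast_ne_zero_of_lt hd (by omega))
    · obtain ⟨v, hv, hA⟩ := exists_separating_vector L A _ hb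
      refine ⟨k + 1, max N (∑ t, L b t * v t).natAbs, fun q hq hlt => ?_⟩
      have := Fact.mk hq
      have hd := intCast_ne_zero_of_lt hv (show _ < q by omega)
      rw [← formEval_intCast] at hd
      set w : T → ZMod q := fun t => (v t : ZMod q) with hw
      have hwA : ∀ i ∈ A, formEval q (L i) w = 0 := fun i hi => by
        rw [hw, formEval_intCast, hA i hi, Int.cast_zero]
      -- Translating along `w` splits off the value of the form `b`.
      let e : {x : T → ZMod q // ∀ i ∈ A, formEval q (L i) x = 0} ≃
          {x : T → ZMod q // ∀ i ∈ insert b A, formEval q (L i) x = 0} × ZMod q :=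
        { toFun := fun x => (⟨x.1 + (-(formEval q (L b) x.1 / formEval q (L b) w)) • w, by
            intro i hi
            rw [formEval_add_smul]
            rcases Finset.mem_insert.mp hi with rfl | hi
            · field_simp
              ring
            · rw [hwA i hi, x.2 i hi]; simp⟩, formEval q (L b) x.1)
          invFun := fun y => ⟨y.1.1 + (y.2 / formEval q (L b) w) • w, fun i hi => by
            rw [formEval_add_smul, hwA i hi, y.1.2 i (Finset.mem_insert_of_mem hi)]; simp⟩
          left_inv := fun x => by
            apply Subtype.ext
            simp
          right_inv := fun y => by
            have hy := y.1.2 b (Finset.mem_insert_self b A)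
            have h2 : formEval q (L b) (y.1.1 + (y.2 / formEval q (L b) w) • w) = y.2 := by
              rw [formEval_add_smul, hy]
              field_simp
              ring
            refine Prod.ext (Subtype.ext ?_) h2
            simp only [h2]
            simp }
      have hcard := Nat.card_congr e
      rw [Nat.card_prod, Nat.card_zmod] at hcard
      rw [← ih q hq (by omega), hcard, pow_succ]
      ring

lemma evPoly_zeros (L : ι → T → ℤ) (A : Finset ι) :
    EvPoly fun q => (Nat.card {x : T → ZMod q // ∀ i ∈ A, formEval q (L i) x = 0} : ℚ) := by
  obtain ⟨k, N, h⟩ := exists_card_zeros_mul_pow L A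
  -- Any single large prime shows that `k ≤ |T|`.
  have hk : k ≤ Fintype.card T := by
    obtain ⟨q, hle, hq⟩ := Nat.exists_infinite_primes (N + 1)
    have := h q hq (by omega)
    exact (Nat.pow_dvd_pow_iff_le_right hq.one_lt).mp (Dvd.intro_left _ this)
  refine ⟨Polynomial.X ^ (Fintype.card T - k), N, fun q hq hlt => ?_⟩
  rw [Polynomial.eval_pow, Polynomial.eval_X]
  have hpos : 0 < q ^ k := pow_pos hq.pos k
  have := h q hq hlt
  rw [← Nat.sub_add_cancel hk, pow_add] at this
  have := Nat.eq_of_mul_eq_mul_right hpos this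
  simp only [this, Nat.cast_pow]

/-- The points with `b ≠ 0` are counted by subtracting those with `b = 0` from all of them, so the
nonvanishing conditions can be removed one at a time. -/
lemma evPoly_vanish_nonvanish (L : ι → T → ℤ) (A B : Finset ι) :
    EvPoly fun q => (Nat.card {x : T → ZMod q //
      (∀ i ∈ A, formEval q (L i) x = 0) ∧ ∀ i ∈ B, formEval q (L i) x ≠ 0} : ℚ) := by
  classical
  induction B using Finset.induction_on generalizing A with
  | empty => simpa using evPoly_zeros L A
  | insert b B _ ih =>
    refine ((ih A).sub (ih (insert b A))).congr fun q hq => ?_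
    have := Fact.mk hq
    rw [eq_sub_iff_add_eq]
    norm_cast
    rw [Nat.card_congr (Equiv.sumCompl fun x : {x : T → ZMod q //
      (∀ i ∈ A, formEval q (L i) x = 0) ∧ ∀ i ∈ B, formEval q (L i) x ≠ 0} =>
        formEval q (L b) x.1 ≠ 0).symm, Nat.card_sum]
    congr 1
    · refine Nat.card_congr (Equiv.trans (Equiv.subtypeEquivRight fun x => ?_)
        (Equiv.subtypeSubtypeEquivSubtypeInter _ fun x => formEval q (L b) x ≠ 0).symm)
      simp only [Finset.forall_mem_insert]
      tauto
    · refine Nat.card_congr (Equiv.trans (Equiv.subtypeEquivRight fun x => ?_)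
        (Equiv.subtypeSubtypeEquivSubtypeInter _ fun x => ¬ formEval q (L b) x ≠ 0).symm)
      simp only [Finset.forall_mem_insert]
      tauto

/-- The number of points at which the vanishing pattern of finitely many integer linear forms
satisfies a fixed predicate is eventually polynomial. -/
lemma evPoly_boolean [Fintype ι] (L : ι → T → ℤ) (Φ : (ι → Prop) → Prop) :
    EvPoly fun q => (Nat.card {x : T → ZMod q // Φ fun i => formEval q (L i) x = 0} : ℚ) := by
  classical
  refine (EvPoly.sum (Finset.univ.filter fun A : Finset ι => Φ (· ∈ A))
    fun A => evPoly_vanish_nonvanish L A Aᶜ).congr fun q hq => ?_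
  have := Fact.mk hq
  norm_cast
  simp only [Nat.card_eq_fintype_card, Fintype.card_subtype]
  rw [← Finset.card_biUnion]
  · congr 1
    ext x
    simp only [Finset.mem_filter, Finset.mem_univ, true_and, Finset.mem_biUnion,
      Finset.mem_compl]
    refine ⟨fun h => ⟨Finset.univ.filter fun i => formEval q (L i) x = 0, ?_, ?_⟩, ?_⟩
    · simpa using h
    · simp
    · rintro ⟨A, hA, h0, h1⟩
      have : (fun i => formEval q (L i) x = 0) = (· ∈ A) := by
        ext i
        exact ⟨fun h => by_contra fun hi => h1 i hi h, h0 i⟩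
      rwa [this]
  · intro A _ B _ hAB
    refine Finset.disjoint_left.mpr fun x hA hB => hAB ?_
    simp only [Finset.mem_filter, Finset.mem_univ, true_and, Finset.mem_compl] at hA hB
    ext i
    exact ⟨fun h => by_contra fun hi => hB.2 i hi (hA.1 i h),
      fun h => by_contra fun hi => hA.2 i hi (hB.1 i h)⟩

end Forms

/-! ### From multisets to ordered tuples -/

/-- Burnside's lemma, with the orbits presented as the fibres of an invariant map `c`, and
restricted to the orbits satisfying a predicate. -/
lemma card_mul_card_eq_sum_fixed {G V Y : Type*} [Group G] [Fintype G] [Finite V] [MulAction G V]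
    (c : V → Y) (hc : ∀ f f', c f = c f' ↔ f ∈ MulAction.orbit G f') (good : Y → Prop)
    (hsurj : ∀ y, good y → ∃ f, c f = y) :
    Nat.card {y // good y} * Fintype.card G
      = ∑ g : G, Nat.card {f : V // good (c f) ∧ g • f = f} := by
  classical
  have := Fintype.ofFinite V
  let X : SubMulAction G V :=
    { carrier := {f | good (c f)}
      smul_mem' := fun g f hf => by
        have : c (g • f) = c f := (hc _ _).mpr ⟨g, rfl⟩
        simpa [this] using hf }
  have B := MulAction.sum_card_fixedBy_eq_card_orbits_mul_card_group G X
  have hE : Nat.card {y // good y} = Nat.card (MulAction.orbitRel.Quotient G X) := by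
    symm
    refine Nat.card_congr (Equiv.ofBijective (Quotient.lift
      (fun f : X => (⟨c f.1, f.2⟩ : {y // good y})) ?_) ⟨?_, ?_⟩)
    · rintro f f' ⟨g, rfl⟩
      exact Subtype.ext ((hc _ _).mpr ⟨g, rfl⟩)
    · rintro ⟨f⟩ ⟨f'⟩ h
      obtain ⟨g, hg⟩ := (hc _ _).mp (congrArg Subtype.val h)
      exact Quotient.sound ⟨g, Subtype.ext hg⟩
    · rintro ⟨y, hy⟩
      obtain ⟨f, rfl⟩ := hsurj y hy
      exact ⟨Quotient.mk _ ⟨f, hy⟩, rfl⟩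
  rw [hE, Nat.card_eq_fintype_card, ← B]
  refine Finset.sum_congr rfl fun g _ => ?_
  rw [← Nat.card_eq_fintype_card]
  exact Nat.card_congr
    { toFun := fun x => ⟨x.1.1, x.1.2, congrArg Subtype.val x.2⟩
      invFun := fun x => ⟨⟨x.1, x.2.1⟩, Subtype.ext x.2.2⟩
      left_inv := fun _ => rfl
      right_inv := fun _ => rfl }

/-- Two enumerations of the same multiset differ by a permutation of the indices: equal
multiplicities give bijections between the fibres, which are glued together. -/
lemma exists_perm_of_map_univ_eq {α β : Type*} [Fintype α] {f g : α → β}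
    (h : Finset.univ.val.map f = Finset.univ.val.map g) :
    ∃ σ : Equiv.Perm α, ∀ k, g (σ k) = f k := by
  classical
  have e : ∀ c, Nonempty ({k // f k = c} ≃ {k // g k = c}) := fun c => by
    refine ⟨Fintype.equivOfCardEq ?_⟩
    have := congrArg (Multiset.count c) h
    rw [Multiset.count_map, Multiset.count_map] at this
    rw [Fintype.card_subtype, Fintype.card_subtype]
    simpa [Finset.card_def, Finset.filter_val, eq_comm] using this
  exact ⟨Equiv.ofFiberEquiv fun c => (e c).some, fun k => Equiv.ofFiberEquiv_map _ k⟩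

/-- The number `N(q)` of `S`-marked `q`-colorings of the subspace arrangement given by the
integer linear forms `L_s^j(x) = Σ_i a s j i · x_i`, associated to `m`, is eventually a
polynomial in the prime `q`. -/
theorem markedColorings_arrangement_eventually_polynomial (n p : ℕ) (hn : 1 ≤ n)
    (hp : 1 ≤ p) (r : Fin p → ℕ) (a : (s : Fin p) → Fin (r s) → Fin n → ℤ)
    (S : Finset (Fin n)) (m : Fin n → ℕ) (hm : ∀ i, 0 < m i) :
    ∃ (P : Polynomial ℚ) (N : ℕ), ∀ q : ℕ, q.Prime → N < q →
      (Nat.card {C : Fin n → Multiset (ZMod q) //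
          (∀ i, Multiset.card (C i) = m i) ∧
          (∀ i ∉ S, (C i).Nodup) ∧
          ¬ ∃ x : Fin n → ZMod q, (∀ i, x i ∈ C i) ∧
            ∃ s : Fin p, ∀ j : Fin (r s), ∑ i, (a s j i : ZMod q) * x i = 0} : ℚ)
        = P.eval (q : ℚ) := by
  classical
  let G := ∀ i, (Equiv.Perm (Fin (m i)))ᵈᵐᵃ
  have : ∀ i, Fintype (Equiv.Perm (Fin (m i)))ᵈᵐᵃ := fun i =>
    Fintype.ofEquiv _ (DomMulAct.mk (M := Equiv.Perm (Fin (m i))))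
  let T := Σ i, Fin (m i)
  -- The left summand indexes the differences of two entries of one multiset; the right summand
  -- indexes the forms of the arrangement evaluated at a choice of one entry from each multiset.
  let ι := (Σ i, Fin (m i) × Fin (m i)) ⊕ ((Σ s, Fin (r s)) × (∀ i, Fin (m i)))
  let L : ι → T → ℤ := Sum.elim
    (fun z => Pi.single ⟨z.1, z.2.1⟩ 1 - Pi.single ⟨z.1, z.2.2⟩ 1)
    (fun z => ∑ i, Pi.single ⟨i, z.2 i⟩ (a z.1.1 z.1.2 i))
  -- `Φ g` is the vanishing pattern of an admissible ordered coloring fixed by `g`.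
  let Φ : G → (ι → Prop) → Prop := fun g v =>
    ((∀ i ∉ S, ∀ k l, v (Sum.inl ⟨i, k, l⟩) → k = l) ∧
      ¬ ∃ σ : ∀ i, Fin (m i), ∃ s, ∀ j, v (Sum.inr (⟨s, j⟩, σ))) ∧
    ∀ i k, v (Sum.inl ⟨i, DomMulAct.mk.symm (g i) k, k⟩)
  have hG : (Fintype.card G : ℚ) ≠ 0 := by exact_mod_cast Fintype.card_ne_zero
  refine ((EvPoly.sum Finset.univ fun g => evPoly_boolean L (Φ g)).const_mul
    (Fintype.card G : ℚ)⁻¹).congr fun q hq => ?_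
  have := Fact.mk hq
  rw [eq_inv_mul_iff_mul_eq₀ hG, mul_comm]
  norm_cast
  have hinl : ∀ i k l (x : T → ZMod q),
      formEval q (L (Sum.inl ⟨i, k, l⟩)) x = 0 ↔ x ⟨i, k⟩ = x ⟨i, l⟩ := by
    intro i k l x
    simp only [L, formEval, Sum.elim_inl, Pi.sub_apply, Int.cast_sub, sub_mul,
      Finset.sum_sub_distrib, sub_eq_zero]
    rw [Finset.sum_eq_single ⟨i, k⟩, Finset.sum_eq_single ⟨i, l⟩] <;>
      simp +contextual
  have hinr : ∀ s j σ (x : T → ZMod q),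
      formEval q (L (Sum.inr (⟨s, j⟩, σ))) x = ∑ i, (a s j i : ZMod q) * x ⟨i, σ i⟩ := by
    intro s j σ x
    simp only [L, formEval, Sum.elim_inr, Finset.sum_apply, Int.cast_sum, Finset.sum_mul]
    rw [Finset.sum_comm]
    refine Finset.sum_congr rfl fun i _ => ?_
    rw [Finset.sum_eq_single ⟨i, σ i⟩] <;> simp +contextual
  rw [card_mul_card_eq_sum_fixed (G := G) (V := ∀ i, Fin (m i) → ZMod q)
    (fun f i => Finset.univ.val.map (f i))]
  · refine Finset.sum_congr rfl fun g _ => ?_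
    refine Nat.card_congr ((Equiv.piCurry fun i (_ : Fin (m i)) => ZMod q).symm.subtypeEquiv
      fun f => ?_)
    simp only [Φ, hinl, hinr]
    refine and_congr ?_ ?_
    · simp only [Multiset.card_map, Finset.card_val, Finset.card_univ, Fintype.card_fin,
        implies_true, true_and, Fintype.nodup_map_univ_iff_injective, Function.Injective]
      refine and_congr Iff.rfl (not_congr ⟨?_, ?_⟩)
      · rintro ⟨x, hx, s, hs⟩
        have hx' : ∀ i, ∃ k, f i k = x i := fun i => by simpa using hx i
        choose σ hσ using hx'
        refine ⟨σ, s, fun j => ?_⟩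
        rw [← hs j]
        exact Finset.sum_congr rfl fun i _ => by rw [← hσ i]; rfl
      · rintro ⟨σ, s, hs⟩
        exact ⟨fun i => f i (σ i), fun i => by simp, s, hs⟩
    · simp only [funext_iff]
      rfl
  · intro f f'
    constructor
    · intro h
      choose σ hσ using fun i => exists_perm_of_map_univ_eq (congrFun h i)
      exact ⟨fun i => DomMulAct.mk (σ i), funext fun i => funext fun k => hσ i k⟩
    · rintro ⟨g, rfl⟩
      funext i
      let σ : Equiv.Perm (Fin (m i)) := DomMulAct.mk.symm (g i)
      change Finset.univ.val.map (f' i ∘ σ) = _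
      rw [← Multiset.map_map, Multiset.map_univ_val_equiv]
  · intro C hC
    have h : ∀ i, ∃ f : Fin (m i) → ZMod q, Finset.univ.val.map f = C i := fun i => by
      obtain ⟨l, hl⟩ := Quot.exists_rep (C i)
      have hlen : l.length = m i := by rw [← hC.1 i, ← hl]; rfl
      rw [← hlen, ← hl]
      exact ⟨l.get, by rw [Fin.univ_val_map, List.ofFn_get]; rfl⟩
    choose f hf using h
    exact ⟨f, funext hf⟩
end

section
/- Let F be a finite field, let n, p ≥ 1, and for each s ∈ {1,…,p} let H_s = {x ∈ F^n : a^s_{1j}x_1 + ⋯ + a^s_{nj}x_n = 0 for all 1 ≤ j ≤ r_s} for given coefficients a^s_{ij} ∈ F. Let m = (m_1,…,m_n) be a tuple of positive integers. Then (m_1! ⋯ m_n!) · A = B, where A is the number of n-tuples (C_1,…,C_n) of subsets C_i ⊆ F with |C_i| = m_i such that no x = (x_1,…,x_n) with x_i ∈ C_i for all i lies in any H_s, and B is the number of families (y_{i,r})_{1≤i≤n, 1≤r≤m_i} of elements of F such that y_{i,r} ≠ y_{i,s} whenever r ≠ s, and for every s ∈ {1,…,p} and every tuple (k_1,…,k_n)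 with 1 ≤ k_i ≤ m_i, the point (y_{1,k_1},…,y_{n,k_n}) does not lie in H_s. -/
/-!
A point of the complement of the clan arrangement is the same thing as a multi-coloring `C`
together with an enumeration `Fin (m i) ≃ C i` of each color set: the tuple `y i` is injective, so
it enumerates its image, and the points obtained by choosing one entry from each tuple are exactly
the points of the product of the images. Each multi-coloring has `∏ i, (m i)!` enumerations.
-/

/-- Families of finsets satisfying `P`, each equipped with enumerations of its members, correspond
bijectively to families of tuples satisfying `Q`, provided that `Q` says precisely that the tuples
are injective and their images satisfy `P`. -/
lemma card_mul_prod_factorial_eq_card_tuples {F : Type*} [Fintype F] [DecidableEq F] {n : ℕ}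
    (m : Fin n → ℕ) (P : (Fin n → Finset F) → Prop) (Q : ((i : Fin n) → Fin (m i) → F) → Prop)
    (hP : ∀ C, P C → ∀ i, (C i).card = m i)
    (hQ : ∀ y, Q y ↔ (∀ i, Function.Injective (y i)) ∧ P fun i => Finset.univ.image (y i)) :
    (∏ i, (m i).factorial) * Nat.card {C // P C} = Nat.card {y // Q y} := by
  classical
  have himage (C : Fin n → Finset F) (e : ∀ i, Fin (m i) ≃ C i) :
      (fun i => Finset.univ.image fun t => (e i t : F)) = C := by
    funext i
    ext x
    simp only [Finset.mem_image, Finset.mem_univ, true_and]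
    refine ⟨?_, fun hx => ⟨(e i).symm ⟨x, hx⟩, by simp⟩⟩
    rintro ⟨t, rfl⟩
    exact (e i t).2
  let f : (Σ C : {C // P C}, ∀ i, Fin (m i) ≃ C.1 i) → {y // Q y} := fun c =>
    ⟨fun i t => c.2 i t, (hQ _).2 ⟨fun i => Subtype.val_injective.comp (c.2 i).injective, by
      rw [himage c.1.1 c.2]
      exact c.1.2⟩⟩
  have hf : Function.Bijective f := by
    constructor
    · rintro ⟨⟨C, hC⟩, e⟩ ⟨⟨D, hD⟩, e'⟩ h
      have hval : (fun i t => (e i t : F)) = fun i t => (e' i t : F) := congrArg Subtype.val h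
      have hCD : C = D := by
        rw [← himage C e, ← himage D e']
        exact congrArg (fun y : (i : Fin n) → Fin (m i) → F =>
          fun i => Finset.univ.image (y i)) hval
      subst hCD
      congr 1
      funext i
      ext t
      exact congrFun (congrFun hval i) t
    · rintro ⟨y, hy⟩
      obtain ⟨hinj, hPy⟩ := (hQ y).1 hy
      refine ⟨⟨⟨_, hPy⟩, fun i => Equiv.ofBijective
        (fun t => ⟨y i t, Finset.mem_image_of_mem _ (Finset.mem_univ t)⟩) ⟨?_, ?_⟩⟩, rfl⟩
      · intro t u h
        exact hinj i (congrArg Subtype.val h)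
      · rintro ⟨x, hx⟩
        obtain ⟨t, -, rfl⟩ := Finset.mem_image.1 hx
        exact ⟨t, rfl⟩
  rw [← Nat.card_congr (Equiv.ofBijective f hf), Nat.card_sigma]
  have hcard (C : {C // P C}) :
      Nat.card (∀ i, Fin (m i) ≃ C.1 i) = ∏ i, (m i).factorial := by
    rw [Nat.card_pi]
    refine Finset.prod_congr rfl fun i _ => ?_
    have e : Fin (m i) ≃ C.1 i := Fintype.equivOfCardEq (by simp [hP C.1 C.2 i])
    rw [Nat.card_eq_fintype_card, Fintype.card_equiv e, Fintype.card_fin]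
  simp only [hcard, Finset.sum_const, Finset.card_univ, smul_eq_mul, Nat.card_eq_fintype_card]
  rw [mul_comm]

/-- `m_1!⋯m_n!` times the number of multi-colorings of the subspace arrangement
`{H_1,…,H_p}` in `F^n` associated to `m` equals the number of points of the complement
of the `m`-clan arrangement. -/
theorem factorial_mul_card_colorings_eq_card_clan_complement
    (F : Type*) [Field F] [Fintype F] (n p : ℕ) (hn : 1 ≤ n) (hp : 1 ≤ p)
    (r : Fin p → ℕ) (a : (s : Fin p) → Fin (r s) → Fin n → F)
    (m : Fin n → ℕ) (hm : ∀ i, 0 < m i) :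
    (∏ i, (m i).factorial) *
      Nat.card {C : Fin n → Finset F //
        (∀ i, (C i).card = m i) ∧
        ¬ ∃ x : Fin n → F, (∀ i, x i ∈ C i) ∧
          ∃ s : Fin p, ∀ j : Fin (r s), ∑ i, a s j i * x i = 0}
    = Nat.card {y : (i : Fin n) → Fin (m i) → F //
        (∀ i : Fin n, ∀ r' s' : Fin (m i), r' ≠ s' → y i r' ≠ y i s') ∧
        ∀ s : Fin p, ∀ k : (i : Fin n) → Fin (m i),
          ¬ ∀ j : Fin (r s), ∑ i, a s j i * y i (k i) = 0} := by
  classical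
  refine card_mul_prod_factorial_eq_card_tuples m _ _ (fun C hC => hC.1) fun y => ?_
  constructor
  · rintro ⟨hinj, hy⟩
    have hinj' (i) : Function.Injective (y i) := fun t u h => by
      by_contra hne
      exact hinj i t u hne h
    refine ⟨hinj', fun i => by simp [Finset.card_image_of_injective _ (hinj' i)], ?_⟩
    rintro ⟨x, hx, s, hs⟩
    choose k _ hk using fun i => Finset.mem_image.1 (hx i)
    exact hy s k fun j => by simpa only [hk] using hs j
  · rintro ⟨hinj, -, hC⟩
    refine ⟨fun i t u hne h => hne (hinj i h), fun s k hs => hC ?_⟩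
    exact ⟨fun i => y i (k i), fun i => Finset.mem_image_of_mem _ (Finset.mem_univ _), s, hs⟩
end

section
/- Let p ≥ 5 be a prime and let m ≥ 1 be an integer. The number of ordered triples (A,B,C) of nonempty subsets of ℤ/pℤ with |A| = |B| = 2, |C| = m, and (A + B) ∩ C = ∅, where A + B = {a + b : a ∈ A, b ∈ B}, equals (p²(p−1)/2)·C(p−3, m) + (p²(p−1)(p−3)/4)·C(p−4, m), where C(a,b) denotes the binomial coefficient (equal to 0 when b > a). -/
open scoped Pointwise

/-!
For fixed `A` and `B`, the admissible `C` are the `m`-subsets of the complement of `A + B`, so there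
are `(p - |A + B|).choose m` of them. Fix `A = {a, a + d}` with `d ≠ 0`. If `B` is one of the
translates `{b, b + d}` of `{0, d}`, then `A + B` is the three-term progression
`{a + b, a + b + d, a + b + 2d}`; otherwise the four sums are distinct and `|A + B| = 4`.
Since `2d ≠ 0`, there are exactly `p` such translates, hence `p.choose 2 - p` other sets `B`, and
`A` runs over `p.choose 2` sets.
-/

/-- The translates of `{0, d}`. -/
def translatesPair (p : ℕ) [NeZero p] (d : ZMod p) : Finset (Finset (ZMod p)) :=
  Finset.univ.image fun b => {b, b + d}

lemma card_translatesPair {p : ℕ} [NeZero p] {d : ZMod p} (h2d : d + d ≠ 0) :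
    (translatesPair p d).card = p := by
  rw [translatesPair, Finset.card_image_of_injective, Finset.card_univ, ZMod.card]
  intro b c (h : ({b, b + d} : Finset (ZMod p)) = {c, c + d})
  have h1 : b ∈ ({c, c + d} : Finset (ZMod p)) := h ▸ by simp
  have h2 : c ∈ ({b, b + d} : Finset (ZMod p)) := h ▸ by simp
  simp only [Finset.mem_insert, Finset.mem_singleton] at h1 h2
  grind

lemma translatesPair_subset {p : ℕ} [NeZero p] {d : ZMod p} (hd : d ≠ 0) :
    translatesPair p d ⊆ Finset.powersetCard 2 Finset.univ := by
  intro B hB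
  obtain ⟨b, -, rfl⟩ := Finset.mem_image.1 hB
  rw [Finset.mem_powersetCard]
  exact ⟨Finset.subset_univ _, Finset.card_pair (by simpa using hd)⟩

lemma pair_add_pair {p : ℕ} (a d b e : ZMod p) :
    ({a, a + d} + {b, b + e} : Finset (ZMod p)) =
      {a + b, a + b + e, a + b + d, a + b + d + e} := by
  ext x
  simp only [Finset.mem_add, Finset.mem_insert, Finset.mem_singleton, exists_eq_or_imp,
    exists_eq_left]
  grind

lemma card_add_of_mem {p : ℕ} [NeZero p] {a d : ZMod p} (hd : d ≠ 0) (h2d : d + d ≠ 0)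
    {B : Finset (ZMod p)} (hB : B ∈ translatesPair p d) :
    ({a, a + d} + B).card = 3 := by
  obtain ⟨b, -, rfl⟩ := Finset.mem_image.1 hB
  rw [pair_add_pair, Finset.card_eq_three]
  refine ⟨a + b, a + b + d, a + b + d + d, ?_, ?_, ?_, ?_⟩
  · grind
  · grind
  · grind
  · ext x
    simp

lemma card_add_of_notMem {p : ℕ} [NeZero p] {a d : ZMod p} (hd : d ≠ 0)
    {B : Finset (ZMod p)} (hB2 : B.card = 2) (hB : B ∉ translatesPair p d) :
    ({a, a + d} + B).card = 4 := by
  obtain ⟨b, c, hbc, rfl⟩ := Finset.card_eq_two.1 hB2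
  obtain ⟨e, rfl⟩ : ∃ e, c = b + e := ⟨c - b, by ring⟩
  have he : e ≠ 0 := by rintro rfl; simp at hbc
  have h1 : e ≠ d := by
    rintro rfl
    exact hB (Finset.mem_image.2 ⟨b, Finset.mem_univ _, rfl⟩)
  have h2 : e + d ≠ 0 := by
    intro h
    refine hB (Finset.mem_image.2 ⟨b + e, Finset.mem_univ _, ?_⟩)
    rw [add_assoc, h, add_zero, Finset.pair_comm]
  rw [pair_add_pair, Finset.card_insert_of_notMem, Finset.card_insert_of_notMem,
    Finset.card_pair]
  · grind
  · simp only [Finset.mem_insert, Finset.mem_singleton]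
    grind
  · simp only [Finset.mem_insert, Finset.mem_singleton]
    grind

/-- For a fixed two-element set `A`, the number of pairs `(B, C)`. -/
lemma sum_choose_compl {p : ℕ} [Fact p.Prime] (hp5 : 5 ≤ p) (m : ℕ) {A : Finset (ZMod p)}
    (hA : A.card = 2) :
    (∑ B ∈ Finset.powersetCard 2 (Finset.univ : Finset (ZMod p)),
      (p - (A + B).card).choose m) =
      (p.choose 2 - p) * (p - 4).choose m + p * (p - 3).choose m := by
  obtain ⟨a, c, hac, rfl⟩ := Finset.card_eq_two.1 hA
  obtain ⟨d, rfl⟩ : ∃ d, c = a + d := ⟨c - a, by ring⟩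
  have hd : d ≠ 0 := by rintro rfl; simp at hac
  have h2d : d + d ≠ 0 := by
    rw [← two_mul]
    refine mul_ne_zero (Ring.two_ne_zero ?_) hd
    rw [ZMod.ringChar_zmod_n]
    omega
  have hsub := translatesPair_subset hd
  rw [← Finset.sum_sdiff hsub]
  congr 1
  · rw [Finset.sum_congr rfl (g := fun _ => (p - 4).choose m), Finset.sum_const, smul_eq_mul,
      Finset.card_sdiff_of_subset hsub, card_translatesPair h2d, Finset.card_powersetCard,
      Finset.card_univ, ZMod.card]
    intro B hB
    rw [Finset.mem_sdiff, Finset.mem_powersetCard] at hB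
    rw [card_add_of_notMem hd hB.1.2 hB.2]
  · rw [Finset.sum_congr rfl (g := fun _ => (p - 3).choose m), Finset.sum_const, smul_eq_mul,
      card_translatesPair h2d]
    intro B hB
    rw [card_add_of_mem hd h2d hB]

lemma card_triples_eq_sum {p : ℕ} [NeZero p] {m : ℕ} (hm : 1 ≤ m) :
    Nat.card {t : Finset (ZMod p) × Finset (ZMod p) × Finset (ZMod p) //
        t.1.Nonempty ∧ t.2.1.Nonempty ∧ t.2.2.Nonempty ∧
        t.1.card = 2 ∧ t.2.1.card = 2 ∧ t.2.2.card = m ∧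
        (t.1 + t.2.1) ∩ t.2.2 = ∅} =
      ∑ A ∈ Finset.powersetCard 2 (Finset.univ : Finset (ZMod p)),
        ∑ B ∈ Finset.powersetCard 2 (Finset.univ : Finset (ZMod p)),
          (p - (A + B).card).choose m := by
  have key : ∀ A B : Finset (ZMod p), (p - (A + B).card).choose m =
      (Finset.powersetCard m (A + B)ᶜ).card := by
    intro A B
    rw [Finset.card_powersetCard, Finset.card_compl, ZMod.card]
  simp_rw [key]
  simp_rw [← Finset.card_sigma]
  rw [Nat.card_eq_fintype_card, Fintype.card_subtype]
  refine Finset.card_nbij' (fun t => ⟨t.1, t.2.1, t.2.2⟩) (fun s => (s.1, s.2.1, s.2.2))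
    ?_ ?_ (fun _ _ => rfl) (fun _ _ => rfl)
  · rintro ⟨A, B, C⟩ h
    simp only [Finset.coe_filter, Finset.mem_univ, true_and, Set.mem_ofPred_eq] at h
    obtain ⟨-, -, -, hA, hB, hC, h⟩ := h
    simp only [Finset.mem_coe, Finset.mem_sigma, Finset.mem_powersetCard, Finset.subset_univ,
      true_and]
    refine ⟨hA, hB, ?_, hC⟩
    exact Finset.subset_compl_iff_disjoint_right.2 (Finset.disjoint_iff_inter_eq_empty.2 h).symm
  · rintro ⟨A, B, C⟩ h
    simp only [Finset.mem_coe, Finset.mem_sigma, Finset.mem_powersetCard, Finset.subset_univ,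
      true_and] at h
    obtain ⟨hA, hB, h, hC⟩ := h
    simp only [Finset.coe_filter, Finset.mem_univ, true_and, Set.mem_ofPred_eq]
    refine ⟨Finset.card_pos.1 (by omega), Finset.card_pos.1 (by omega),
      Finset.card_pos.1 (by omega), hA, hB, hC, ?_⟩
    rw [← Finset.disjoint_iff_inter_eq_empty]
    exact (Finset.subset_compl_iff_disjoint_right.1 h).symm

theorem card_triples_sumset_disjoint (p : ℕ) (hp : p.Prime) (hp5 : 5 ≤ p)
    (m : ℕ) (hm : 1 ≤ m) :
    (Nat.card {t : Finset (ZMod p) × Finset (ZMod p) × Finset (ZMod p) //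
        t.1.Nonempty ∧ t.2.1.Nonempty ∧ t.2.2.Nonempty ∧
        t.1.card = 2 ∧ t.2.1.card = 2 ∧ t.2.2.card = m ∧
        (t.1 + t.2.1) ∩ t.2.2 = ∅} : ℚ)
      = ((p : ℚ) ^ 2 * ((p : ℚ) - 1) / 2) * ((p - 3).choose m : ℚ)
        + ((p : ℚ) ^ 2 * ((p : ℚ) - 1) * ((p : ℚ) - 3) / 4) * ((p - 4).choose m : ℚ) := by
  have : Fact p.Prime := ⟨hp⟩
  have hle : p ≤ p.choose 2 := by
    rw [Nat.choose_two_right, Nat.le_div_iff_mul_le two_pos]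
    exact Nat.mul_le_mul_left p (by omega)
  rw [card_triples_eq_sum hm,
    Finset.sum_congr rfl fun A hA => sum_choose_compl hp5 m (Finset.mem_powersetCard.1 hA).2,
    Finset.sum_const, Finset.card_powersetCard, Finset.card_univ, ZMod.card, smul_eq_mul]
  push_cast [Nat.cast_sub hle, Nat.cast_choose_two]
  ring
end

section
/- Let n, p ≥ 1, and for each s ∈ {1,…,p} let a^s = (a^s_1,…,a^s_n) ∈ ℤ^n be a nonzero integer vector, defining the hyperplane H_s = {x : a^s_1 x_1 + ⋯ + a^s_n x_n = 0}. Let m = (m_1,…,m_n) be a tuple of positive integers, and for a prime q let N(q) be the number of n-tuples (C_1,…,C_n) of subsets of 𝔽_q = ℤ/qℤ with |C_i| = m_i such that there is no x = (x_1,…,x_n) with x_i ∈ C_i for all i satisfying a^s_1 x_1 + ⋯ + a^s_n x_n = 0 in 𝔽_q for some s. Suppose P is a polynomial with rational coefficients such that P(q) = N(q) for infinitely many primes q. Then (−1)^{m_1+⋯+m_n} · P(−q) ≥ 0 for every nonnegative integer q. -/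
/-!
Choosing an ordering of every colour set `C i` turns a multi-coloring into a point `x` of
`𝔽_q ^ (∑ i, m i)`, with coordinates `x (i, j)` for `j < m i`, that lies on none of the hyperplanes
`x (i, j) = x (i, k)` for `j ≠ k`, nor on any `∑ i, a s i * x (i, f i) = 0` for a choice function `f`.
Every multi-coloring arises from exactly `∏ i, (m i)!` such points (`card_points_eq`).

The number of points of `𝔽_q ^ ι` off finitely many hyperplanes with integer coefficients is, for
all large primes `q`, the value at `q` of a polynomial `χ` with `(-1) ^ |ι| * χ (-t) ≥ 0` for all
`t ≥ 0` (`exists_charPoly`). This is proved by deletion-restriction: deleting a hyperplane keeps the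
dimension, restricting to it lowers the dimension by one, and the two resulting polynomials are
subtracted, so the sign condition is inherited. Since `P * ∏ i, (m i)!` and `χ` agree at infinitely
many primes, they are equal.
-/

/-- The set of points of `𝔽_q ^ ι` lying on none of the hyperplanes (with integer normal vectors)
in the list `L`. A zero vector in `L` makes the set empty. -/
def arrCompl {ι : Type} [Fintype ι] (L : List (ι → ℤ)) (q : ℕ) : Set (ι → ZMod q) :=
  {x | ∀ w ∈ L, ∑ i, (w i : ZMod q) * x i ≠ 0}

/-- The normal vector, in the coordinates other than `i`, of the trace of the hyperplane `w` on the
hyperplane `v`. It is obtained by eliminating the `i`-th coordinate, scaled by `v i` in order to stay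
integral, and is meaningful when `v i` is invertible. -/
def restrictVec {ι : Type} (v : ι → ℤ) (i : ι) (w : ι → ℤ) : {j // j ≠ i} → ℤ :=
  fun j => v i * w j - w i * v j

lemma restrictVec_sum {ι : Type} [Fintype ι] [DecidableEq ι] (q : ℕ) (v w : ι → ℤ) (i : ι)
    (x : ι → ZMod q) (hx : ∑ j, (v j : ZMod q) * x j = 0) :
    ∑ j : {j // j ≠ i}, (restrictVec v i w j : ZMod q) * x j
      = (v i : ZMod q) * ∑ j, (w j : ZMod q) * x j := by
  have h1 : (v i : ZMod q) * ∑ j, (w j : ZMod q) * x j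
      = ∑ j, ((v i : ZMod q) * w j - w i * v j) * x j := by
    have h : ∑ j, ((v i : ZMod q) * w j - w i * v j) * x j
        = (v i : ZMod q) * ∑ j, (w j : ZMod q) * x j - w i * ∑ j, (v j : ZMod q) * x j := by
      rw [Finset.mul_sum, Finset.mul_sum, ← Finset.sum_sub_distrib]
      exact Finset.sum_congr rfl fun j _ => by ring
    rw [h, hx]; ring
  rw [h1, Fintype.sum_eq_add_sum_subtype_ne _ i]
  simp [restrictVec, mul_comm]

/-- The points of the hyperplane `v` that avoid `L` are counted by the restricted arrangement. -/
lemma card_restrict {ι : Type} [Fintype ι] [DecidableEq ι] (q : ℕ) [Fact q.Prime]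
    (v : ι → ℤ) (i : ι) (hv : (v i : ZMod q) ≠ 0) (L : List (ι → ℤ)) :
    Nat.card {x : ι → ZMod q // x ∈ arrCompl L q ∧ ∑ j, (v j : ZMod q) * x j = 0}
      = Nat.card (arrCompl (L.map (restrictVec v i)) q) := by
  refine Nat.card_eq_of_bijective
    (fun x => ⟨fun j => x.1 j, ?_⟩) ⟨?_, ?_⟩
  · intro w' hw'
    obtain ⟨w, hw, rfl⟩ := List.mem_map.1 hw'
    rw [restrictVec_sum q v w i x.1 x.2.2]
    exact mul_ne_zero hv (x.2.1 w hw)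
  · rintro ⟨x, hx, hx0⟩ ⟨y, hy, hy0⟩ hxy
    have hne : ∀ j, j ≠ i → x j = y j := fun j hj =>
      congrFun (congrArg Subtype.val hxy) ⟨j, hj⟩
    have hi : x i = y i := by
      rw [Fintype.sum_eq_add_sum_subtype_ne _ i] at hx0 hy0
      have : ∑ j : {j // j ≠ i}, (v j : ZMod q) * x j = ∑ j : {j // j ≠ i}, (v j : ZMod q) * y j :=
        Finset.sum_congr rfl fun j _ => by rw [hne j j.2]
      rw [this, ← hy0] at hx0
      exact mul_left_cancel₀ hv (add_right_cancel hx0)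
    refine Subtype.ext (funext fun j => ?_)
    by_cases hj : j = i
    · subst hj; exact hi
    · exact hne j hj
  · rintro ⟨y, hy⟩
    -- the `i`-th coordinate is forced by the equation of the hyperplane `v`
    let x : ι → ZMod q := fun j => if h : j = i then
      -((v i : ZMod q)⁻¹ * ∑ k : {k // k ≠ i}, (v k : ZMod q) * y k) else y ⟨j, h⟩
    have hxy : ∀ j : {j // j ≠ i}, x j = y j := fun j => by simp [x, j.2]
    have hx0 : ∑ j, (v j : ZMod q) * x j = 0 := by
      rw [Fintype.sum_eq_add_sum_subtype_ne _ i]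
      simp only [hxy]
      simp only [x, dif_pos]
      field_simp
      ring
    refine ⟨⟨x, fun w hw h0 => ?_, hx0⟩, Subtype.ext (funext hxy)⟩
    have h := restrictVec_sum q v w i x hx0
    rw [h0, mul_zero] at h
    simp only [hxy] at h
    exact hy _ (List.mem_map_of_mem hw) h

lemma card_cons {ι : Type} [Fintype ι] (q : ℕ) [Fact q.Prime] (v : ι → ℤ) (L : List (ι → ℤ)) :
    Nat.card (arrCompl L q) = Nat.card (arrCompl (v :: L) q)
      + Nat.card {x : ι → ZMod q // x ∈ arrCompl L q ∧ ∑ j, (v j : ZMod q) * x j = 0} := by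
  have h : arrCompl L q = arrCompl (v :: L) q ∪
      {x : ι → ZMod q | x ∈ arrCompl L q ∧ ∑ j, (v j : ZMod q) * x j = 0} := by
    ext x
    simp only [arrCompl, List.forall_mem_cons, Set.mem_ofPred_eq, Set.mem_union]
    tauto
  have hd : Disjoint (arrCompl (v :: L) q)
      {x : ι → ZMod q | x ∈ arrCompl L q ∧ ∑ j, (v j : ZMod q) * x j = 0} := by
    rw [Set.disjoint_left]
    rintro x hx ⟨_, hx0⟩
    exact hx v List.mem_cons_self hx0
  have hc := Set.ncard_union_eq hd (Set.toFinite _) (Set.toFinite _)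
  rw [← h] at hc
  exact hc

/-- For large primes `q`, the number of points off an integral hyperplane arrangement is a polynomial
in `q` (the characteristic polynomial) whose values at nonpositive numbers have sign
`(-1) ^ dimension`. The proof is deletion-restriction. -/
lemma exists_charPoly (k : ℕ) : ∀ {ι : Type} [Fintype ι] (L : List (ι → ℤ)), L.length = k →
    ∃ χ : Polynomial ℚ, (∀ t : ℚ, 0 ≤ t → 0 ≤ (-1) ^ Fintype.card ι * χ.eval (-t)) ∧
      ∃ B : ℕ, ∀ q : ℕ, q.Prime → B < q → (Nat.card (arrCompl L q) : ℚ) = χ.eval (q : ℚ) := by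
  classical
  induction k with
  | zero =>
    intro ι _ L hL
    obtain rfl := List.length_eq_zero_iff.1 hL
    refine ⟨Polynomial.X ^ Fintype.card ι, fun t ht => ?_, 0, fun q hq _ => ?_⟩
    · simp only [Polynomial.eval_pow, Polynomial.eval_X]
      rw [← mul_pow]
      exact pow_nonneg (by linarith) _
    · have := Fact.mk hq
      have : arrCompl ([] : List (ι → ℤ)) q = Set.univ := by ext; simp [arrCompl]
      rw [this]
      simp [Nat.card_eq_fintype_card, ZMod.card]
  | succ k ih =>
    intro ι _ L hL
    obtain ⟨v, L, rfl⟩ := List.exists_of_length_succ L hL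
    have hL' : L.length = k := by simpa using hL
    by_cases hv : v = 0
    · refine ⟨0, by simp, 0, fun q hq _ => ?_⟩
      have : arrCompl (v :: L) q = ∅ := by
        ext x; simp [arrCompl, hv]
      simp [this]
    · obtain ⟨i, hi⟩ := Function.ne_iff.1 hv
      obtain ⟨χ₁, h₁, B₁, hB₁⟩ := ih L hL'
      obtain ⟨χ₂, h₂, B₂, hB₂⟩ := ih (L.map (restrictVec v i)) (by simpa using hL')
      have hcard : Fintype.card ι = Fintype.card {j // j ≠ i} + 1 := by
        have := Fintype.card_pos_iff.2 ⟨i⟩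
        have h2 : Fintype.card {j // j ≠ i} = Fintype.card ι - 1 := by
          simp [Fintype.card_subtype_compl]
        omega
      refine ⟨χ₁ - χ₂, fun t ht => ?_, max (max B₁ B₂) (v i).natAbs, fun q hq hB => ?_⟩
      · have e₁ := h₁ t ht
        have e₂ := h₂ t ht
        rw [hcard, pow_succ] at e₁ ⊢
        rw [Polynomial.eval_sub]
        linarith
      · simp only [max_lt_iff] at hB
        have := Fact.mk hq
        have hvi : (v i : ZMod q) ≠ 0 := by
          rw [Ne, ZMod.intCast_zmod_eq_zero_iff_dvd]
          intro hdvd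
          have := Nat.le_of_dvd (Int.natAbs_pos.2 hi) (Int.natCast_dvd.1 hdvd)
          omega
        have h := card_cons q v L
        rw [card_restrict q v i hvi L] at h
        rw [Polynomial.eval_sub, ← hB₁ q hq hB.1.1, ← hB₂ q hq hB.1.2, h]
        push_cast; ring

/-- Points are ordered multi-colorings: each multi-coloring comes from `∏ i, (m i)!` orderings. -/
lemma card_points_eq {n p : ℕ} (a : Fin p → Fin n → ℤ) (m : Fin n → ℕ) (q : ℕ) [Fact q.Prime] :
    Nat.card {x : (i : Fin n) → Fin (m i) → ZMod q //
        (∀ i, Function.Injective (x i)) ∧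
        ∀ s : Fin p, ∀ f : (i : Fin n) → Fin (m i), ∑ i, (a s i : ZMod q) * x i (f i) ≠ 0}
      = Nat.card {C : Fin n → Finset (ZMod q) //
            (∀ i, (C i).card = m i) ∧
            ¬ ∃ x : Fin n → ZMod q, (∀ i, x i ∈ C i) ∧
              ∃ s : Fin p, ∑ i, (a s i : ZMod q) * x i = 0} * ∏ i, (m i).factorial := by
  classical
  set T := {C : Fin n → Finset (ZMod q) //
            (∀ i, (C i).card = m i) ∧
            ¬ ∃ x : Fin n → ZMod q, (∀ i, x i ∈ C i) ∧
              ∃ s : Fin p, ∑ i, (a s i : ZMod q) * x i = 0} with hT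
  have hfib : ∀ C : T, Fintype.card ((i : Fin n) → (Fin (m i) ≃ C.1 i)) = ∏ i, (m i).factorial := by
    intro C
    rw [Fintype.card_pi]
    refine Finset.prod_congr rfl fun i _ => ?_
    rw [Fintype.card_equiv ((finCongr (C.2.1 i).symm).trans (C.1 i).equivFin.symm), Fintype.card_fin]
  have hsig : Nat.card (Σ C : T, (i : Fin n) → (Fin (m i) ≃ C.1 i))
      = Nat.card T * ∏ i, (m i).factorial := by
    rw [Nat.card_eq_fintype_card, Nat.card_eq_fintype_card, Fintype.card_sigma,
      Finset.sum_congr rfl fun C _ => hfib C]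
    simp
  rw [← hsig]
  symm
  refine Nat.card_eq_of_bijective (fun z => ⟨fun i j => (z.2 i j : ZMod q), ?_, ?_⟩) ⟨?_, ?_⟩
  · exact fun i => Subtype.val_injective.comp (z.2 i).injective
  · exact fun s f h0 => z.1.2.2 ⟨fun i => z.2 i (f i), fun i => (z.2 i (f i)).2, s, h0⟩
  · rintro ⟨⟨C, hC⟩, e⟩ ⟨⟨D, hD⟩, g⟩ h
    have h' : ∀ i j, (e i j : ZMod q) = g i j := fun i j =>
      congrFun (congrFun (congrArg Subtype.val h) i) j
    have hCD : C = D := by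
      funext i
      ext c
      constructor
      · intro hc
        have := h' i ((e i).symm ⟨c, hc⟩)
        rw [Equiv.apply_symm_apply] at this
        rw [show c = _ from this]
        exact (g i _).2
      · intro hc
        have := h' i ((g i).symm ⟨c, hc⟩)
        rw [Equiv.apply_symm_apply] at this
        rw [show c = _ from this.symm]
        exact (e i _).2
    subst hCD
    have : e = g := by
      funext i
      exact Equiv.ext fun j => Subtype.ext (h' i j)
    rw [this]
  · rintro ⟨x, hinj, hx⟩
    refine ⟨⟨⟨fun i => Finset.univ.image (x i), fun i => ?_, ?_⟩, fun i =>
      Equiv.ofBijective (fun j => ⟨x i j, by simp⟩) ⟨?_, ?_⟩⟩, ?_⟩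
    · rw [Finset.card_image_of_injective _ (hinj i)]; simp
    · rintro ⟨y, hy, s, h0⟩
      have hy' : ∀ i, ∃ j, x i j = y i := fun i => by simpa using hy i
      choose f hf using hy'
      exact hx s f (by simpa only [hf] using h0)
    · exact fun j k hjk => hinj i (congrArg Subtype.val hjk)
    · rintro ⟨c, hc⟩
      obtain ⟨j, -, hj⟩ := Finset.mem_image.1 hc
      exact ⟨j, Subtype.ext hj⟩
    · rfl

/-- The hyperplane arrangement whose complement over `𝔽_q` is the set of ordered multi-colorings. -/
lemma exists_ordered_arrangement {n p : ℕ} (a : Fin p → Fin n → ℤ) (m : Fin n → ℕ) :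
    ∃ L : List ((Σ i : Fin n, Fin (m i)) → ℤ), ∀ q : ℕ,
      Nat.card (arrCompl L q) = Nat.card {x : (i : Fin n) → Fin (m i) → ZMod q //
        (∀ i, Function.Injective (x i)) ∧
        ∀ s : Fin p, ∀ f : (i : Fin n) → Fin (m i), ∑ i, (a s i : ZMod q) * x i (f i) ≠ 0} := by
  classical
  let L₁ : List ((Σ i : Fin n, Fin (m i)) → ℤ) :=
    (Finset.univ : Finset {t : Σ i : Fin n, Fin (m i) × Fin (m i) // t.2.1 ≠ t.2.2}).toList.map
      fun t => Pi.single ⟨t.1.1, t.1.2.1⟩ 1 - Pi.single ⟨t.1.1, t.1.2.2⟩ 1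
  let L₂ : List ((Σ i : Fin n, Fin (m i)) → ℤ) :=
    (Finset.univ : Finset (Fin p × ((i : Fin n) → Fin (m i)))).toList.map
      fun t z => if z.2 = t.2 z.1 then a t.1 z.1 else 0
  refine ⟨L₁ ++ L₂, fun q => Nat.card_congr
    ((Equiv.piCurry fun (i : Fin n) (_ : Fin (m i)) => ZMod q).subtypeEquiv fun x => ?_)⟩
  have e₁ : ∀ i (j k : Fin (m i)), ∑ z : (Σ i : Fin n, Fin (m i)),
      (((Pi.single ⟨i, j⟩ 1 - Pi.single ⟨i, k⟩ 1 : (Σ i : Fin n, Fin (m i)) → ℤ) z : ℤ) : ZMod q) * x z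
        = x ⟨i, j⟩ - x ⟨i, k⟩ := by
    intro i j k
    simp [Pi.single_apply, sub_mul, Finset.sum_sub_distrib]
  have e₂ : ∀ s (f : (i : Fin n) → Fin (m i)), ∑ z : (Σ i : Fin n, Fin (m i)),
      ((if z.2 = f z.1 then a s z.1 else 0 : ℤ) : ZMod q) * x z
        = ∑ i, (a s i : ZMod q) * x ⟨i, f i⟩ := by
    intro s f
    rw [Fintype.sum_sigma]
    simp
  simp only [arrCompl, Set.mem_ofPred_eq, List.forall_mem_append, L₁, L₂, List.forall_mem_map,
    Finset.mem_toList, Finset.mem_univ, forall_const, e₁, e₂, Prod.forall,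
    Subtype.forall, Sigma.forall, Equiv.piCurry_apply, Sigma.curry]
  refine and_congr (forall_congr' fun i => ?_) Iff.rfl
  constructor
  · intro h j k hjk
    by_contra hne
    exact h j k hne (sub_eq_zero.2 hjk)
  · intro h j k hne h0
    exact hne (h (sub_eq_zero.1 h0))

/-- If `P` is a rational polynomial agreeing, at infinitely many primes `q`, with the
number of multi-colorings associated to `m` of the hyperplane arrangement given by the
nonzero integer vectors `a^1,…,a^p` over `𝔽_q`, then `(−1)^{m_1+⋯+m_n}·P(−q) ≥ 0` for
every nonnegative integer `q`. -/
theorem multichromatic_neg_eval_nonneg (n p : ℕ) (hn : 1 ≤ n) (hp : 1 ≤ p)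
    (a : Fin p → Fin n → ℤ) (ha : ∀ s, a s ≠ 0)
    (m : Fin n → ℕ) (hm : ∀ i, 0 < m i) (P : Polynomial ℚ)
    (hP : {q : ℕ | q.Prime ∧
        (Nat.card {C : Fin n → Finset (ZMod q) //
            (∀ i, (C i).card = m i) ∧
            ¬ ∃ x : Fin n → ZMod q, (∀ i, x i ∈ C i) ∧
              ∃ s : Fin p, ∑ i, (a s i : ZMod q) * x i = 0} : ℚ)
          = P.eval (q : ℚ)}.Infinite) :
    ∀ q : ℕ, 0 ≤ (-1 : ℚ) ^ (∑ i, m i) * P.eval (-(q : ℚ)) := by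
  obtain ⟨L, hL⟩ := exists_ordered_arrangement a m
  obtain ⟨χ, hχ, B, hB⟩ := exists_charPoly _ L rfl
  set F : ℕ := ∏ i, (m i).factorial with hF
  have hFpos : (0 : ℚ) < F := by
    exact_mod_cast Finset.prod_pos fun i _ => Nat.factorial_pos (m i)
  have hEq : P * Polynomial.C (F : ℚ) = χ := by
    refine Polynomial.eq_of_infinite_eval_eq _ _ ?_
    refine ((hP.sdiff (Set.finite_Iic B)).image
      (Nat.cast_injective (R := ℚ)).injOn).mono ?_
    rintro _ ⟨q, ⟨⟨hq, hN⟩, hqB⟩, rfl⟩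
    have := Fact.mk hq
    have h := hB q hq (not_le.1 hqB)
    rw [hL, card_points_eq, Nat.cast_mul, hN] at h
    rw [Set.mem_ofPred_eq, Polynomial.eval_mul, Polynomial.eval_C]
    exact h
  intro q
  have h := hχ q (Nat.cast_nonneg q)
  rw [← hEq] at h
  simp only [Fintype.card_sigma, Fintype.card_fin, Polynomial.eval_mul, Polynomial.eval_C,
    ← mul_assoc] at h
  exact nonneg_of_mul_nonneg_left h hFpos
end
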